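/- arXiv:2405.19786 — 2 statements merged into one kernel-verified Lean document; each statement's English description precedes it below -/
import Mathlib

section
/- Let N ≥ 2 and 0 < r₁ < r₂ < R, with S = B_{r₂}∖closure(B_{r₁}). Then inf{ H^{N-1}(∂E)/|E ∩ S| : E ⋐ B_R open with smooth boundary and |E ∩ S| > 0 } = H^{N-1}(∂B_{r₂})/|S|, and E = B_{r₂} is optimal. -/
/-!
Let `S` be the shell `{r < ‖x‖ < q}` and `d = n + 1` the dimension. Every ray that meets a bounded
set `E` leaves it through `frontier E`, so `E ∩ S` lies in the shadow `(0, 1] • frontier E`. A piece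
`A` of the frontier at distance about `a` from the origin has a radial projection to the unit sphere
of measure at most `a⁻ⁿ μH[n] A`, and its shadow only meets the part `{r < ‖x‖ < min q a}` of the
shell. By rotation invariance the volume of this shadow is proportional to the measure of the
projection, so it is at most `(min q a) ^ d - r ^ d` times `a⁻ⁿ μH[n] A`, up to a constant. Since
`s ↦ (s ^ d - r ^ d) / s ^ n` is increasing, the worst case is `a = q`, where the sphere of radius
`q` gives equality. Cutting the frontier into annuli `L ^ k ≤ ‖x‖ < L ^ (k + 1)` and summing proves
the inequality with an error factor `L ^ n`, and then `L → 1`.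
-/

open MeasureTheory Filter
open scoped ENNReal

noncomputable section

open Metric Module Set
open NormedSpace hiding normalize
open scoped Pointwise RealInnerProductSpace Topology

section Uniform

variable {X : Type*} [MetricSpace X] [MeasurableSpace X] {s : Set X} {μ ν : Measure X}

/-- A measure on a metric space is uniformly distributed on `s` if it is concentrated on `s` and
the measure of a ball centred in `s` depends on the radius only. -/
structure IsUniformlyDistributedOn (μ : Measure X) (s : Set X) : Prop where
  ae_mem : ∀ᵐ x ∂μ, x ∈ s
  measure_closedBall_eq :
    ∀ x ∈ s, ∀ y ∈ s, ∀ r, μ (closedBall x r) = μ (closedBall y r)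

namespace IsUniformlyDistributedOn

lemma add (hμ : IsUniformlyDistributedOn μ s) (hν : IsUniformlyDistributedOn ν s) :
    IsUniformlyDistributedOn (μ + ν) s where
  ae_mem := ae_add_measure_iff.2 ⟨hμ.ae_mem, hν.ae_mem⟩
  measure_closedBall_eq x hx y hy r := by
    simp only [Measure.add_apply, hμ.measure_closedBall_eq x hx y hy r,
      hν.measure_closedBall_eq x hx y hy r]

variable [BorelSpace X] [SecondCountableTopology X] [HasBesicovitchCovering X]

-- By Besicovitch differentiation the density is a limit of ratios of measures of balls, which
-- does not depend on the centre.
lemma exists_eq_smul_of_absolutelyContinuous [IsLocallyFiniteMeasure μ]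
    [IsLocallyFiniteMeasure ν] (hμ : IsUniformlyDistributedOn μ s)
    (hν : IsUniformlyDistributedOn ν s) (hμν : μ ≪ ν) : ∃ c : ℝ≥0∞, μ = c • ν := by
  rcases eq_or_ne ν 0 with rfl | hν0
  · exact ⟨0, by simpa using hμν⟩
  have : (ae ν).NeBot := ae_neBot.2 hν0
  have hdensity := Besicovitch.ae_tendsto_rnDeriv μ ν
  obtain ⟨x₀, hx₀, hx₀s⟩ := (hdensity.and hν.ae_mem).exists
  have hconst : μ.rnDeriv ν =ᵐ[ν] fun _ => μ.rnDeriv ν x₀ := by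
    filter_upwards [hdensity, hν.ae_mem] with x hx hxs
    refine tendsto_nhds_unique hx (hx₀.congr fun r => ?_)
    rw [hμ.measure_closedBall_eq x₀ hx₀s x hxs, hν.measure_closedBall_eq x₀ hx₀s x hxs]
  refine ⟨μ.rnDeriv ν x₀, ?_⟩
  rw [← withDensity_const, ← withDensity_congr_ae hconst, Measure.withDensity_rnDeriv_eq μ ν hμν]

lemma measure_mul_measure_univ_comm [IsFiniteMeasure μ] [IsFiniteMeasure ν]
    (hμ : IsUniformlyDistributedOn μ s) (hν : IsUniformlyDistributedOn ν s) (A : Set X) :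
    μ A * ν univ = μ univ * ν A := by
  obtain ⟨c, hc⟩ := hμ.exists_eq_smul_of_absolutelyContinuous (hμ.add hν)
    (Measure.absolutelyContinuous_of_le (Measure.le_add_right le_rfl))
  obtain ⟨d, hd⟩ := hν.exists_eq_smul_of_absolutelyContinuous (hμ.add hν)
    (Measure.absolutelyContinuous_of_le (Measure.le_add_left le_rfl))
  generalize μ + ν = m at hc hd
  simp only [hc, hd, Measure.smul_apply, smul_eq_mul]
  ring

end IsUniformlyDistributedOn

end Uniform

lemma inter_frontier_nonempty_of_isPreconnected {X : Type*} [TopologicalSpace X] {s E : Set X}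
    (hs : IsPreconnected s) (hE : (s ∩ E).Nonempty) (hEc : (s ∩ Eᶜ).Nonempty) :
    (s ∩ frontier E).Nonempty := by
  by_contra hempty
  have hcover : s ⊆ interior E ∪ (closure E)ᶜ := fun x hx => by
    by_contra hx'
    rw [mem_union, not_or, notMem_compl_iff] at hx'
    exact hempty ⟨x, hx, hx'.2, hx'.1⟩
  obtain ⟨x, hxs, hxE⟩ := hE
  obtain ⟨y, hys, hyE⟩ := hEc
  obtain ⟨z, -, hz, hz'⟩ := hs _ _ isOpen_interior isClosed_closure.isOpen_compl hcover
    ⟨x, hxs, (hcover hxs).resolve_right fun h => h (subset_closure hxE)⟩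
    ⟨y, hys, (hcover hys).resolve_left fun h => hyE (interior_subset h)⟩
  exact hz' (subset_closure (interior_subset hz))

-- `s ↦ s - r ^ (n + 1) / s ^ n` is increasing.
lemma pow_mul_pow_succ_sub_le {r s q : ℝ} (hr : 0 ≤ r) (hs : 0 ≤ s) (hsq : s ≤ q) (n : ℕ) :
    q ^ n * (s ^ (n + 1) - r ^ (n + 1)) ≤ s ^ n * (q ^ (n + 1) - r ^ (n + 1)) := by
  have hq : 0 ≤ q := hs.trans hsq
  have hpow : s ^ n ≤ q ^ n := by gcongr
  have h₁ : 0 ≤ s ^ n * q ^ n * (q - s) := mul_nonneg (by positivity) (sub_nonneg.2 hsq)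
  have h₂ : 0 ≤ r ^ (n + 1) * (q ^ n - s ^ n) := mul_nonneg (by positivity) (sub_nonneg.2 hpow)
  linear_combination h₁ + h₂

lemma le_of_forall_one_lt_le_ofReal_pow_mul {x y : ℝ≥0∞} (n : ℕ)
    (h : ∀ L : ℝ, 1 < L → x ≤ ENNReal.ofReal L ^ n * y) : x ≤ y := by
  have hpow : Tendsto (fun L : ℝ => ENNReal.ofReal L ^ n) (𝓝[>] 1) (𝓝 1) := by
    have hcont : Continuous fun L : ℝ => ENNReal.ofReal L ^ n :=
      (ENNReal.continuous_pow n).comp ENNReal.continuous_ofReal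
    simpa using (hcont.tendsto 1).mono_left nhdsWithin_le_nhds
  have hlim := ENNReal.Tendsto.mul_const (b := y) hpow (Or.inl one_ne_zero)
  rw [one_mul] at hlim
  exact ge_of_tendsto hlim (eventually_mem_nhdsWithin.mono h)

section Norm

variable {V : Type*} [NormedAddCommGroup V]

/-- The spherical shell `B_s ∖ closure B_r` centred at the origin, empty when `s ≤ r`. -/
def shell (V : Type*) [NormedAddCommGroup V] (r s : ℝ) : Set V :=
  ball 0 s \ closedBall 0 r

lemma shell_eq_empty {r s : ℝ} (hsr : s ≤ r) : shell V r s = ∅ :=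
  sdiff_eq_empty.2 (ball_subset_closedBall.trans (closedBall_subset_closedBall hsr))

lemma mem_shell {r s : ℝ} {x : V} : x ∈ shell V r s ↔ ‖x‖ < s ∧ r < ‖x‖ := by
  simp [shell]

variable [MeasurableSpace V] [BorelSpace V]

lemma measurableSet_shell (r s : ℝ) : MeasurableSet (shell V r s) :=
  measurableSet_ball.diff measurableSet_closedBall

lemma tsum_measure_inter_annulus_le (μ : Measure V) (F : Set V) {L : ℝ} (hL : 1 ≤ L) :
    ∑' k : ℤ, μ (F ∩ norm ⁻¹' Ico (L ^ k) (L ^ (k + 1))) ≤ μ F := by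
  have hmeas (k : ℤ) : MeasurableSet (norm ⁻¹' Ico (L ^ k) (L ^ (k + 1)) : Set V) :=
    measurable_norm measurableSet_Ico
  have hdisj : Pairwise (Function.onFun Disjoint
      fun k : ℤ => (norm ⁻¹' Ico (L ^ k) (L ^ (k + 1)) : Set V)) :=
    fun i j hij => ((zpow_right_mono₀ hL).pairwise_disjoint_on_Ico_succ hij).preimage _
  calc ∑' k : ℤ, μ (F ∩ norm ⁻¹' Ico (L ^ k) (L ^ (k + 1)))
      = ∑' k : ℤ, μ.restrict F (norm ⁻¹' Ico (L ^ k) (L ^ (k + 1))) := by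
        simp only [Measure.restrict_apply (hmeas _), inter_comm F]
    _ ≤ μ.restrict F univ :=
        tsum_measure_le_measure_univ (fun k => (hmeas k).nullMeasurableSet)
          (hdisj.mono fun _ _ h => h.aedisjoint)
    _ = μ F := Measure.restrict_apply_univ F

end Norm

section Normed

variable {V : Type*} [NormedAddCommGroup V] [NormedSpace ℝ V]

-- The ray from `x` away from the origin leaves the bounded set `E`.
lemma diff_zero_subset_Ioc_smul_frontier {E : Set V} (hE : Bornology.IsBounded E) :
    E \ {0} ⊆ Ioc (0 : ℝ) 1 • frontier E := by
  rintro x ⟨hxE, hx0⟩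
  have hx : 0 < ‖x‖ := norm_pos_iff.2 hx0
  obtain ⟨R, hR⟩ := hE.subset_ball 0
  have hleave : max 1 (R / ‖x‖) • x ∉ E := fun h => by
    have hlt := mem_ball_zero_iff.1 (hR h)
    rw [norm_smul, Real.norm_of_nonneg (by positivity), ← lt_div_iff₀ hx] at hlt
    exact hlt.not_ge (le_max_right _ _)
  have hray : IsPreconnected ((fun t : ℝ => t • x) '' Ici 1) :=
    isPreconnected_Ici.image _ (by fun_prop)
  obtain ⟨_, ⟨t, ht, rfl⟩, htE⟩ := inter_frontier_nonempty_of_isPreconnected hray (E := E)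
    ⟨x, ⟨1, self_mem_Ici, one_smul ℝ x⟩, hxE⟩
    ⟨_, ⟨_, mem_Ici.2 (le_max_left _ _), rfl⟩, hleave⟩
  have ht0 : 0 < t := one_pos.trans_le ht
  exact mem_smul.2 ⟨t⁻¹, ⟨inv_pos.2 ht0, inv_le_one_of_one_le₀ ht⟩, t • x, htE,
    inv_smul_smul₀ ht0.ne' x⟩

lemma Ioc_smul_inter_shell_subset {r q b : ℝ} {A : Set V} (hA : ∀ x ∈ A, ‖x‖ < b) :
    Ioc (0 : ℝ) 1 • A ∩ shell V r q ⊆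
      shell V r (min q b) ∩ NormedSpace.normalize ⁻¹' (NormedSpace.normalize '' A) := by
  rintro _ ⟨⟨t, ht, y, hy, rfl⟩, hshell⟩
  obtain ⟨hlt, hgt⟩ := mem_shell.1 hshell
  have hle : ‖t • y‖ ≤ ‖y‖ := by
    rw [norm_smul, Real.norm_of_nonneg ht.1.le]
    exact mul_le_of_le_one_left (norm_nonneg y) ht.2
  exact ⟨mem_shell.2 ⟨lt_min hlt (hle.trans_lt (hA y hy)), hgt⟩, y, hy,
    (normalize_smul_of_pos ht.1 y).symm⟩

variable [MeasurableSpace V] [BorelSpace V]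

lemma hausdorffMeasure_sphere_zero {d q : ℝ} (hd : 0 ≤ d) (hq : 0 < q) :
    μH[d] (sphere (0 : V) q) = ENNReal.ofReal q ^ d * μH[d] (sphere (0 : V) 1) := by
  have hsphere : sphere (0 : V) q = q • sphere (0 : V) 1 := by
    rw [smul_sphere' hq.ne', smul_zero, mul_one, Real.norm_of_nonneg hq.le]
  rw [hsphere, Measure.hausdorffMeasure_smul₀ hd hq.ne', ENNReal.smul_def, smul_eq_mul,
    ENNReal.coe_rpow_of_nonneg _ hd, ENNReal.ofReal, Real.toNNReal_eq_nnnorm_of_nonneg hq.le]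

lemma measurable_normalize : Measurable (NormedSpace.normalize : V → V) :=
  measurable_norm.inv.smul measurable_id

end Normed

section Euclidean

variable {V : Type*} [NormedAddCommGroup V] [InnerProductSpace ℝ V]

lemma lipschitzOnWith_normalize {a : ℝ} (ha : 0 < a) :
    LipschitzOnWith (Real.toNNReal a⁻¹) (NormedSpace.normalize : V → V) {x | a ≤ ‖x‖} := by
  refine LipschitzOnWith.of_dist_le_mul fun x (hx : a ≤ ‖x‖) y (hy : a ≤ ‖y‖) => ?_
  rw [Real.coe_toNNReal _ (inv_nonneg.2 ha.le), dist_eq_norm, dist_eq_norm]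
  have hx₀ : 0 < ‖x‖ := ha.trans_le hx
  have hy₀ : 0 < ‖y‖ := ha.trans_le hy
  have hidentity : ‖x‖ * ‖y‖ * ‖NormedSpace.normalize x - NormedSpace.normalize y‖ ^ 2 =
      ‖x - y‖ ^ 2 - (‖x‖ - ‖y‖) ^ 2 := by
    rw [norm_sub_sq_real, norm_sub_sq_real, norm_normalize_eq_one_iff.2 (norm_pos_iff.1 hx₀),
      norm_normalize_eq_one_iff.2 (norm_pos_iff.1 hy₀)]
    simp only [NormedSpace.normalize, real_inner_smul_left, real_inner_smul_right]
    field_simp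
    ring
  have hnorms : a * a ≤ ‖x‖ * ‖y‖ := mul_le_mul hx hy ha.le hx₀.le
  refine le_of_sq_le_sq ?_ (by positivity)
  rw [mul_pow, inv_pow, ← div_eq_inv_mul, le_div_iff₀ (by positivity)]
  calc ‖NormedSpace.normalize x - NormedSpace.normalize y‖ ^ 2 * a ^ 2
      = a * a * ‖NormedSpace.normalize x - NormedSpace.normalize y‖ ^ 2 := by ring
    _ ≤ ‖x‖ * ‖y‖ * ‖NormedSpace.normalize x - NormedSpace.normalize y‖ ^ 2 := by gcongr
    _ ≤ ‖x - y‖ ^ 2 := by linarith [sq_nonneg (‖x‖ - ‖y‖)]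

lemma one_le_norm_add_of_mem_orthogonal {v w : V} (hv : ‖v‖ = 1) (hw : w ∈ (ℝ ∙ v)ᗮ) :
    1 ≤ ‖v + w‖ := by
  have horth : ⟪v, w⟫ = 0 := Submodule.mem_orthogonal_singleton_iff_inner_right.1 hw
  have hpythagoras := norm_add_sq_eq_norm_sq_add_norm_sq_of_inner_eq_zero v w horth
  nlinarith [norm_nonneg (v + w), mul_self_nonneg ‖w‖]

-- The radius 3 bounds `‖x / ⟪v, x⟫ - v‖ ≤ 2 + 1`.
lemma cap_subset_normalize_image_tangent {v : V} (hv : ‖v‖ = 1) :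
    sphere (0 : V) 1 ∩ {x | 2⁻¹ < ⟪v, x⟫} ⊆
      NormedSpace.normalize '' ((fun w : (ℝ ∙ v)ᗮ => v + (w : V)) '' closedBall 0 3) := by
  rintro x ⟨hx, hvx : 2⁻¹ < ⟪v, x⟫⟩
  rw [mem_sphere_zero_iff_norm] at hx
  have hc : 0 < ⟪v, x⟫ := (inv_pos.2 two_pos).trans hvx
  have hmem : ⟪v, x⟫⁻¹ • x - v ∈ (ℝ ∙ v)ᗮ := by
    rw [Submodule.mem_orthogonal_singleton_iff_inner_right, inner_sub_right,
      real_inner_smul_right, inv_mul_cancel₀ hc.ne', real_inner_self_eq_norm_sq, hv, one_pow,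
      sub_self]
  refine ⟨⟪v, x⟫⁻¹ • x, ⟨⟨_, hmem⟩, ?_, add_sub_cancel v _⟩, ?_⟩
  · rw [mem_closedBall_zero_iff, Submodule.coe_norm]
    have hinv : ⟪v, x⟫⁻¹ ≤ 2 := inv_le_of_inv_le₀ two_pos hvx.le
    calc ‖⟪v, x⟫⁻¹ • x - v‖ ≤ ‖⟪v, x⟫⁻¹ • x‖ + ‖v‖ := norm_sub_le _ _
      _ = ⟪v, x⟫⁻¹ + 1 := by
        rw [norm_smul, norm_inv, Real.norm_of_nonneg hc.le, hx, hv, mul_one]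
      _ ≤ 3 := by linarith
  · rw [normalize_smul_of_pos (inv_pos.2 hc), normalize_eq_self_of_norm_eq_one hx]

variable [MeasurableSpace V] [BorelSpace V]

lemma hausdorffMeasure_image_normalize_le {d a : ℝ} (hd : 0 ≤ d) (ha : 0 < a) {A : Set V}
    (hA : ∀ x ∈ A, a ≤ ‖x‖) :
    μH[d] (NormedSpace.normalize '' A) ≤ ENNReal.ofReal a⁻¹ ^ d * μH[d] A :=
  ((lipschitzOnWith_normalize ha).mono hA).hausdorffMeasure_image_le hd

lemma isUniformlyDistributedOn_sphere {μ : Measure V} {r : ℝ}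
    (hmem : ∀ᵐ x ∂μ, x ∈ sphere (0 : V) r)
    (hinv : ∀ e : V ≃ₗᵢ[ℝ] V, MeasurePreserving e μ μ) :
    IsUniformlyDistributedOn μ (sphere (0 : V) r) where
  ae_mem := hmem
  measure_closedBall_eq x hx y hy ρ := by
    have hxy : ‖x‖ = ‖y‖ := by rw [mem_sphere_zero_iff_norm.1 hx, mem_sphere_zero_iff_norm.1 hy]
    let e : V ≃ₗᵢ[ℝ] V := (ℝ ∙ (x - y))ᗮ.reflection
    have he : e x = y := Submodule.reflection_sub hxy
    have hball : e ⁻¹' closedBall y ρ = closedBall x ρ := by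
      rw [← he]
      exact e.isometry.preimage_closedBall x ρ
    rw [← hball, (hinv e).measure_preimage measurableSet_closedBall.nullMeasurableSet]

lemma isUniformlyDistributedOn_hausdorffMeasure_restrict_sphere (d r : ℝ) :
    IsUniformlyDistributedOn (μH[d].restrict (sphere (0 : V) r)) (sphere 0 r) := by
  refine isUniformlyDistributedOn_sphere (ae_restrict_mem isClosed_sphere.measurableSet) fun e => ?_
  have hsphere : e ⁻¹' sphere 0 r = sphere 0 r := by
    ext x
    simp
  have hpreserving : MeasurePreserving e μH[d] μH[d] :=
    e.toIsometryEquiv.measurePreserving_hausdorffMeasure d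
  simpa only [hsphere] using
    hpreserving.restrict_preimage (isClosed_sphere (x := (0 : V)) (ε := r)).measurableSet

variable [FiniteDimensional ℝ V]

lemma volume_shell [Nontrivial V] {r s : ℝ} (hr : 0 ≤ r) (hrs : r < s) :
    volume (shell V r s) =
      ENNReal.ofReal (s ^ finrank ℝ V - r ^ finrank ℝ V) * volume (ball (0 : V) 1) := by
  rw [shell, measure_sdiff (closedBall_subset_ball hrs) measurableSet_closedBall.nullMeasurableSet
      measure_closedBall_lt_top.ne, Measure.addHaar_ball _ _ (hr.trans hrs.le),
    Measure.addHaar_closedBall _ _ hr, ENNReal.ofReal_sub _ (by positivity), ENNReal.sub_mul]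
  exact fun _ _ => measure_ball_lt_top.ne

lemma volume_shell_lt_top (r s : ℝ) : volume (shell V r s) < ∞ :=
  (measure_mono sdiff_subset).trans_lt measure_ball_lt_top

/-- The distribution of the directions `x / ‖x‖` of the points of a spherical shell. -/
def shellDirectionMeasure (V : Type*) [NormedAddCommGroup V] [InnerProductSpace ℝ V]
    [FiniteDimensional ℝ V] [MeasurableSpace V] [BorelSpace V] (r s : ℝ) : Measure V :=
  (volume.restrict (shell V r s)).map NormedSpace.normalize

lemma volume_shell_inter_preimage_normalize_le (r s : ℝ) (B : Set V) :
    volume (shell V r s ∩ NormedSpace.normalize ⁻¹' B) ≤ shellDirectionMeasure V r s B := by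
  rw [inter_comm, ← Measure.restrict_apply' (measurableSet_shell r s)]
  exact Measure.le_map_apply measurable_normalize.aemeasurable B

lemma shellDirectionMeasure_univ (r s : ℝ) :
    shellDirectionMeasure V r s univ = volume (shell V r s) := by
  rw [shellDirectionMeasure, Measure.map_apply measurable_normalize MeasurableSet.univ,
    preimage_univ, Measure.restrict_apply_univ]

instance isFiniteMeasure_shellDirectionMeasure (r s : ℝ) :
    IsFiniteMeasure (shellDirectionMeasure V r s) :=
  ⟨by simpa only [shellDirectionMeasure_univ] using volume_shell_lt_top r s⟩

lemma isUniformlyDistributedOn_shellDirectionMeasure {r : ℝ} (hr : 0 ≤ r) (s : ℝ) :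
    IsUniformlyDistributedOn (shellDirectionMeasure V r s) (sphere 0 1) := by
  refine isUniformlyDistributedOn_sphere ?_ fun e => ?_
  · refine (ae_map_iff measurable_normalize.aemeasurable isClosed_sphere.measurableSet).2 ?_
    filter_upwards [ae_restrict_mem (measurableSet_shell r s)] with x hx
    exact mem_sphere_zero_iff_norm.2 <| norm_normalize_eq_one_iff.2 <|
      norm_pos_iff.1 <| hr.trans_lt (mem_shell.1 hx).2
  · have hshell : e ⁻¹' shell V r s = shell V r s := by
      ext x
      simp [mem_shell]
    have hrestrict : MeasurePreserving e (volume.restrict (shell V r s))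
        (volume.restrict (shell V r s)) := by
      simpa only [hshell] using e.measurePreserving.restrict_preimage (measurableSet_shell r s)
    exact (measurable_normalize.measurePreserving _).of_semiconj hrestrict
      (fun x => by simp [NormedSpace.normalize]) e.continuous.measurable

variable {n : ℕ} [Fact (finrank ℝ V = n + 1)]

lemma hausdorffMeasure_cap_lt_top {v : V} (hv : ‖v‖ = 1) :
    μH[n] (sphere (0 : V) 1 ∩ {x | 2⁻¹ < ⟪v, x⟫}) < ∞ := by
  let tangent : (ℝ ∙ v)ᗮ → V := fun w => v + w
  have htangent : Isometry tangent :=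
    (isometry_add_left v).comp (ℝ ∙ v)ᗮ.subtypeₗᵢ.isometry
  have hfinrank : finrank ℝ (ℝ ∙ v)ᗮ = n :=
    Submodule.finrank_orthogonal_span_singleton (norm_ne_zero_iff.1 (hv ▸ one_ne_zero))
  have hball : μH[n] (closedBall (0 : (ℝ ∙ v)ᗮ) 3) < ∞ := by
    rw [← hfinrank]
    exact measure_closedBall_lt_top
  have himage : μH[n] (NormedSpace.normalize '' (tangent '' closedBall 0 3)) ≤
      ENNReal.ofReal 1⁻¹ ^ (n : ℝ) * μH[n] (tangent '' closedBall 0 3) :=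
    hausdorffMeasure_image_normalize_le n.cast_nonneg one_pos
      (forall_mem_image.2 fun w _ => one_le_norm_add_of_mem_orthogonal hv w.2)
  refine ((measure_mono (cap_subset_normalize_image_tangent hv)).trans himage).trans_lt ?_
  rw [htangent.hausdorffMeasure_image (Or.inl n.cast_nonneg)]
  simpa using hball

lemma hausdorffMeasure_unitSphere_lt_top : μH[n] (sphere (0 : V) 1) < ∞ := by
  refine (isCompact_sphere (0 : V) 1).measure_lt_top_of_nhdsWithin fun v hv => ?_
  have hv' : ‖v‖ = 1 := mem_sphere_zero_iff_norm.1 hv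
  refine ⟨_, inter_mem_nhdsWithin _ (IsOpen.mem_nhds ?_ ?_), hausdorffMeasure_cap_lt_top hv'⟩
  · exact isOpen_lt continuous_const (continuous_const.inner continuous_id)
  · rw [mem_ofPred_eq, real_inner_self_eq_norm_sq, hv']
    norm_num

lemma volume_shell_inter_preimage_normalize_mul_le {r : ℝ} (hr : 0 ≤ r) (s : ℝ) (B : Set V) :
    volume (shell V r s ∩ NormedSpace.normalize ⁻¹' B) * μH[n] (sphere (0 : V) 1) ≤
      volume (shell V r s) * μH[n] B := by
  let σ : Measure V := μH[n].restrict (sphere 0 1)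
  have hσ : IsUniformlyDistributedOn σ (sphere 0 1) :=
    isUniformlyDistributedOn_hausdorffMeasure_restrict_sphere n 1
  have hσ_univ : σ univ = μH[n] (sphere (0 : V) 1) := Measure.restrict_apply_univ _
  have : IsFiniteMeasure σ := ⟨hσ_univ ▸ hausdorffMeasure_unitSphere_lt_top⟩
  calc volume (shell V r s ∩ NormedSpace.normalize ⁻¹' B) * μH[n] (sphere (0 : V) 1)
      ≤ shellDirectionMeasure V r s B * σ univ := by
        rw [hσ_univ]
        gcongr ?_ * _
        exact volume_shell_inter_preimage_normalize_le r s B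
    _ = volume (shell V r s) * σ B := by
        rw [(isUniformlyDistributedOn_shellDirectionMeasure hr s).measure_mul_measure_univ_comm hσ,
          shellDirectionMeasure_univ]
    _ ≤ volume (shell V r s) * μH[n] B := by
        gcongr _ * ?_
        exact Measure.restrict_apply_le _ _

lemma ofReal_pow_mul_volume_shell_le {r s q : ℝ} (hr : 0 ≤ r) (hsq : s ≤ q) :
    ENNReal.ofReal q ^ n * volume (shell V r s) ≤ ENNReal.ofReal s ^ n * volume (shell V r q) := by
  rcases le_or_gt s r with hsr | hrs
  · simp [shell_eq_empty hsr]
  have hn : finrank ℝ V = n + 1 := Fact.out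
  have : Nontrivial V := Module.nontrivial_of_finrank_pos (R := ℝ) (by lia)
  have hs : 0 ≤ s := hr.trans hrs.le
  have hq : 0 ≤ q := hs.trans hsq
  rw [volume_shell hr hrs, volume_shell hr (hrs.trans_le hsq), hn, ← mul_assoc, ← mul_assoc,
    ← ENNReal.ofReal_pow hq, ← ENNReal.ofReal_pow hs, ← ENNReal.ofReal_mul (by positivity),
    ← ENNReal.ofReal_mul (by positivity)]
  gcongr ENNReal.ofReal ?_ * _
  exact pow_mul_pow_succ_sub_le hr hs hsq n

lemma hausdorffMeasure_sphere_mul_volume_Ioc_smul_le_of_subset_annulus {r q a b : ℝ} (hr : 0 ≤ r)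
    (hq : 0 < q) (ha : 0 < a) {A : Set V} (hA : A ⊆ norm ⁻¹' Ico a b) :
    μH[n] (sphere (0 : V) q) * volume (Ioc (0 : ℝ) 1 • A ∩ shell V r q) ≤
      ENNReal.ofReal (b / a) ^ n * (μH[n] A * volume (shell V r q)) := by
  let s := min q b
  let B : Set V := NormedSpace.normalize '' A
  have hshadow : Ioc (0 : ℝ) 1 • A ∩ shell V r q ⊆
      shell V r s ∩ NormedSpace.normalize ⁻¹' B :=
    Ioc_smul_inter_shell_subset fun x hx => (hA hx).2
  have hB : μH[n] B ≤ ENNReal.ofReal a⁻¹ ^ n * μH[n] A := by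
    simpa only [ENNReal.rpow_natCast] using
      hausdorffMeasure_image_normalize_le n.cast_nonneg ha fun x hx => (hA hx).1
  calc μH[n] (sphere (0 : V) q) * volume (Ioc (0 : ℝ) 1 • A ∩ shell V r q)
      ≤ μH[n] (sphere (0 : V) q) * volume (shell V r s ∩ NormedSpace.normalize ⁻¹' B) := by gcongr
    _ = ENNReal.ofReal q ^ n * (volume (shell V r s ∩ NormedSpace.normalize ⁻¹' B) *
          μH[n] (sphere (0 : V) 1)) := by
        rw [hausdorffMeasure_sphere_zero n.cast_nonneg hq, ENNReal.rpow_natCast]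
        ring
    _ ≤ ENNReal.ofReal q ^ n * (volume (shell V r s) * μH[n] B) := by
        gcongr _ * ?_
        exact volume_shell_inter_preimage_normalize_mul_le hr s B
    _ = ENNReal.ofReal q ^ n * volume (shell V r s) * μH[n] B := (mul_assoc _ _ _).symm
    _ ≤ ENNReal.ofReal b ^ n * volume (shell V r q) * (ENNReal.ofReal a⁻¹ ^ n * μH[n] A) := by
        gcongr ?_ * ?_
        refine (ofReal_pow_mul_volume_shell_le hr (min_le_left q b)).trans ?_
        gcongr
        exact min_le_right q b
    _ = ENNReal.ofReal (b / a) ^ n * (μH[n] A * volume (shell V r q)) := by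
        rw [div_eq_mul_inv, ENNReal.ofReal_mul' (inv_nonneg.2 ha.le)]
        ring

lemma hausdorffMeasure_sphere_mul_volume_Ioc_smul_le {r q : ℝ} (hr : 0 ≤ r) (hq : 0 < q)
    (F : Set V) :
    μH[n] (sphere (0 : V) q) * volume (Ioc (0 : ℝ) 1 • F ∩ shell V r q) ≤
      μH[n] F * volume (shell V r q) := by
  refine le_of_forall_one_lt_le_ofReal_pow_mul n fun L hL => ?_
  have hL₀ : 0 < L := one_pos.trans hL
  let A : ℤ → Set V := fun k => F ∩ norm ⁻¹' Ico (L ^ k) (L ^ (k + 1))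
  have hcover : Ioc (0 : ℝ) 1 • F ∩ shell V r q ⊆ ⋃ k, Ioc (0 : ℝ) 1 • A k ∩ shell V r q := by
    rintro _ ⟨⟨t, ht, y, hy, rfl⟩, hshell⟩
    have hy₀ : y ≠ 0 :=
      (smul_ne_zero_iff.1 (norm_pos_iff.1 (hr.trans_lt (mem_shell.1 hshell).2))).2
    obtain ⟨k, hk⟩ := exists_mem_Ico_zpow (norm_pos_iff.2 hy₀) hL
    exact mem_iUnion.2 ⟨k, smul_mem_smul ht ⟨hy, hk⟩, hshell⟩
  have hratio (k : ℤ) : L ^ (k + 1) / L ^ k = L := by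
    rw [zpow_add_one₀ hL₀.ne', mul_div_cancel_left₀ _ (zpow_pos hL₀ k).ne']
  calc μH[n] (sphere (0 : V) q) * volume (Ioc (0 : ℝ) 1 • F ∩ shell V r q)
      ≤ μH[n] (sphere (0 : V) q) * ∑' k, volume (Ioc (0 : ℝ) 1 • A k ∩ shell V r q) := by
        gcongr
        exact (measure_mono hcover).trans (measure_iUnion_le _)
    _ = ∑' k, μH[n] (sphere (0 : V) q) * volume (Ioc (0 : ℝ) 1 • A k ∩ shell V r q) :=
        ENNReal.tsum_mul_left.symm
    _ ≤ ∑' k, ENNReal.ofReal L ^ n * (μH[n] (A k) * volume (shell V r q)) := by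
        refine ENNReal.tsum_le_tsum fun k => ?_
        simpa only [hratio] using
          hausdorffMeasure_sphere_mul_volume_Ioc_smul_le_of_subset_annulus hr hq
            (zpow_pos hL₀ k) (inter_subset_right : A k ⊆ _)
    _ = ENNReal.ofReal L ^ n * ((∑' k, μH[n] (A k)) * volume (shell V r q)) := by
        rw [ENNReal.tsum_mul_left, ENNReal.tsum_mul_right]
    _ ≤ ENNReal.ofReal L ^ n * (μH[n] F * volume (shell V r q)) := by
        gcongr
        exact tsum_measure_inter_annulus_le μH[n] F hL.le

theorem cheeger_type_ball_optimal_general {r q : ℝ} (hr : 0 ≤ r) (hq : 0 < q) {E : Set V}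
    (hE : Bornology.IsBounded E) :
    μH[n] (frontier (ball (0 : V) q)) * volume (E ∩ (ball 0 q \ closedBall 0 r)) ≤
      μH[n] (frontier E) * volume (ball (0 : V) q \ closedBall 0 r) := by
  have hshadow : E ∩ shell V r q ⊆ Ioc (0 : ℝ) 1 • frontier E ∩ shell V r q :=
    fun x hx => ⟨diff_zero_subset_Ioc_smul_frontier hE
      ⟨hx.1, norm_pos_iff.1 (hr.trans_lt (mem_shell.1 hx.2).2)⟩, hx.2⟩
  rw [frontier_ball _ hq.ne']
  exact (mul_le_mul_right (measure_mono hshadow) _).trans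
    (hausdorffMeasure_sphere_mul_volume_Ioc_smul_le hr hq (frontier E))

end Euclidean

/-- Cheeger-type optimality of the ball: among open sets `E` compactly contained in `B_R`,
the ball `B_{r₂}` minimizes the ratio `H^{N-1}(∂E)/|E ∩ S|`, where `S` is the shell
`B_{r₂} \ closedBall r₁`; equivalently the infimum of the ratio equals
`H^{N-1}(∂B_{r₂})/|S|` and `E = B_{r₂}` is optimal. -/
theorem cheeger_type_ball_optimal (N : ℕ) (r₁ r₂ R : ℝ)
    (hN : 2 ≤ N) (h1 : 0 < r₁) (h2 : r₁ < r₂) (h3 : r₂ < R) :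
    ∀ E : Set (EuclideanSpace ℝ (Fin N)), IsOpen E → closure E ⊆ Metric.ball 0 R →
      0 < volume (E ∩ (Metric.ball (0 : EuclideanSpace ℝ (Fin N)) r₂ \ Metric.closedBall 0 r₁)) →
      Measure.hausdorffMeasure ((N:ℝ) - 1)
          (frontier (Metric.ball (0 : EuclideanSpace ℝ (Fin N)) r₂)) *
        volume (E ∩ (Metric.ball (0 : EuclideanSpace ℝ (Fin N)) r₂ \ Metric.closedBall 0 r₁))
      ≤ Measure.hausdorffMeasure ((N:ℝ) - 1) (frontier E) *
        volume (Metric.ball (0 : EuclideanSpace ℝ (Fin N)) r₂ \ Metric.closedBall 0 r₁) := by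
  obtain ⟨n, rfl⟩ : ∃ n, N = n + 1 := Nat.exists_eq_succ_of_ne_zero (by lia)
  have : Fact (Module.finrank ℝ (EuclideanSpace ℝ (Fin (n + 1))) = n + 1) := ⟨by simp⟩
  intro E _ hER _
  have hE : Bornology.IsBounded E := Metric.isBounded_ball.subset (subset_closure.trans hER)
  simpa using cheeger_type_ball_optimal_general (n := n) h1.le (h1.trans h2) hE
end
end

section
/- Let 1 ≤ p ≤ N and 0 < γ < 1. There exists a constant C = C(N,p,γ) > 0 such that for every open set Ω ⊆ ℝ^N with R_{p,γ}(Ω) < +∞, one has λ_p(Ω) ≤ C·R_{p,γ}(Ω)^(-p); moreover, if R_{p,γ}(Ω) = +∞ then λ_p(Ω) = 0. -/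
open MeasureTheory Filter
open scoped ENNReal

noncomputable section

/-- Relative `p`-capacity of a compact set `K` inside an open set `E`:
infimum of the `p`-Dirichlet energy over smooth compactly supported functions
in `E` which are at least `1` on `K`. -/
noncomputable def pCapacity {N : ℕ} (p : ℝ) (K E : Set (EuclideanSpace ℝ (Fin N))) : ℝ :=
  sInf {c : ℝ | ∃ φ : EuclideanSpace ℝ (Fin N) → ℝ, ContDiff ℝ (⊤ : ℕ∞) φ ∧ HasCompactSupport φ ∧
    tsupport φ ⊆ E ∧ (∀ x ∈ K, 1 ≤ φ x) ∧ c = ∫ x, ‖fderiv ℝ φ x‖ ^ p}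

/-- Sharp `L^p` Poincaré constant of an open set. -/
noncomputable def lambdaP {N : ℕ} (p : ℝ) (Ω : Set (EuclideanSpace ℝ (Fin N))) : ℝ :=
  sInf {c : ℝ | ∃ φ : EuclideanSpace ℝ (Fin N) → ℝ, ContDiff ℝ (⊤ : ℕ∞) φ ∧ HasCompactSupport φ ∧
    tsupport φ ⊆ Ω ∧ (∫ x, |φ x| ^ p) = 1 ∧ c = ∫ x, ‖fderiv ℝ φ x‖ ^ p}

/-- `closedBall x₀ r \ Ω` is `(p,γ)`-negligible. -/
def IsNegligible {N : ℕ} (p γ : ℝ) (Ω : Set (EuclideanSpace ℝ (Fin N)))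
    (x₀ : EuclideanSpace ℝ (Fin N)) (r : ℝ) : Prop :=
  pCapacity p (Metric.closedBall x₀ r \ Ω) (Metric.ball x₀ (2*r)) ≤
    γ * pCapacity p (Metric.closedBall x₀ r) (Metric.ball x₀ (2*r))

/-- The `(p,γ)`-capacitary inradius of an open set, as an extended nonnegative real. -/
noncomputable def capInradius {N : ℕ} (p γ : ℝ) (Ω : Set (EuclideanSpace ℝ (Fin N))) : ℝ≥0∞ :=
  sSup {ρ : ℝ≥0∞ | ∃ r : ℝ, 0 < r ∧ ρ = ENNReal.ofReal r ∧
    ∃ x₀ : EuclideanSpace ℝ (Fin N), IsNegligible p γ Ω x₀ r}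

/-!
Let `u` be a nearly optimal potential of `closedBall x₀ r \ Ω` in `ball x₀ (2 * r)`, and truncate
it to `(b - u)⁺` with `b < 1` close to `1`. Up to smoothing, this vanishes near
`closedBall x₀ r \ Ω`, so multiplying it by a cutoff `η` of the ball gives a test function of `Ω`,
with energy bounded in terms of the capacity of the ball. Its mass is bounded below: take a cutoff
`η'` of a slightly smaller ball, supported where `η = 1`. On that smaller ball `u + η' (b - u)⁺` is
at least `b`, and its energy exceeds that of `u`, at most about `γ` times the capacity of the
ball, only through a term controlled by the mass of `η (b - u)⁺`. If this mass were small, the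
capacity of the smaller ball would be well below that of the ball itself, which a contraction close
to the identity excludes. Scaling carries the resulting bound from radius `1` to all radii.
-/

open Metric Set Topology

theorem integrable_norm_rpow_of_hasCompactSupport {X F : Type*} [TopologicalSpace X]
    [MeasurableSpace X] [OpensMeasurableSpace X] [NormedAddCommGroup F] {μ : Measure X}
    [IsFiniteMeasureOnCompacts μ] {f : X → F} {p : ℝ} (hf : Continuous f)
    (hfc : HasCompactSupport f) (hp : 0 < p) : Integrable (fun x => ‖f x‖ ^ p) μ :=
  (hf.norm.rpow_const fun _ => Or.inr hp.le).integrable_of_hasCompactSupport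
    (hfc.comp_left (g := fun y => ‖y‖ ^ p) (by simp [Real.zero_rpow hp.ne']))

section TestFunctions

variable {E : Type*} [NormedAddCommGroup E] [NormedSpace ℝ E]

/-- `φ ∈ C_c^∞(U)`, unbundled and with `U` an arbitrary set, to match the classes of competitors
in `pCapacity` and `lambdaP`. -/
structure IsTestFunction (φ : E → ℝ) (U : Set E) : Prop where
  contDiff : ContDiff ℝ (⊤ : ℕ∞) φ
  hasCompactSupport : HasCompactSupport φ
  tsupport_subset : tsupport φ ⊆ U

namespace IsTestFunction

variable {φ u : E → ℝ} {U V : Set E}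

theorem mono (hφ : IsTestFunction φ U) (h : U ⊆ V) : IsTestFunction φ V :=
  ⟨hφ.contDiff, hφ.hasCompactSupport, hφ.tsupport_subset.trans h⟩

theorem differentiable (hφ : IsTestFunction φ U) : Differentiable ℝ φ :=
  hφ.contDiff.differentiable (by simp)

theorem continuous_fderiv (hφ : IsTestFunction φ U) : Continuous (fderiv ℝ φ) :=
  hφ.contDiff.continuous_fderiv (by simp)

theorem exists_norm_fderiv_le (hφ : IsTestFunction φ U) :
    ∃ L > 0, ∀ x, ‖fderiv ℝ φ x‖ ≤ L := by
  obtain ⟨L, hL⟩ := (hφ.hasCompactSupport.fderiv (𝕜 := ℝ)).exists_bound_of_continuous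
    hφ.continuous_fderiv
  exact ⟨max L 1, by positivity, fun x => (hL x).trans (le_max_left L 1)⟩

theorem eq_zero_of_notMem (hφ : IsTestFunction φ U) {x : E} (hx : x ∉ U) : φ x = 0 :=
  image_eq_zero_of_notMem_tsupport fun h => hx (hφ.tsupport_subset h)

theorem add (hφ : IsTestFunction φ U) (hu : IsTestFunction u U) :
    IsTestFunction (fun x => φ x + u x) U where
  contDiff := hφ.contDiff.add hu.contDiff
  hasCompactSupport := hφ.hasCompactSupport.add hu.hasCompactSupport
  tsupport_subset := (tsupport_add φ u).trans (union_subset hφ.tsupport_subset hu.tsupport_subset)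

theorem mul_contDiff (hφ : IsTestFunction φ U) (hu : ContDiff ℝ (⊤ : ℕ∞) u) :
    IsTestFunction (fun x => φ x * u x) U where
  contDiff := hφ.contDiff.mul hu
  hasCompactSupport := hφ.hasCompactSupport.mul_right
  tsupport_subset := tsupport_mul_subset_left.trans hφ.tsupport_subset

theorem const_mul (hφ : IsTestFunction φ U) (k : ℝ) : IsTestFunction (fun x => k * φ x) U := by
  simpa only [mul_comm] using hφ.mul_contDiff (u := fun _ => k) contDiff_const

theorem comp_left (hφ : IsTestFunction φ U) {T : ℝ → ℝ} (hT : ContDiff ℝ (⊤ : ℕ∞) T)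
    (hT0 : T 0 = 0) : IsTestFunction (T ∘ φ) U where
  contDiff := hT.comp hφ.contDiff
  hasCompactSupport := hφ.hasCompactSupport.comp_left hT0
  tsupport_subset := (tsupport_comp_subset hT0 φ).trans hφ.tsupport_subset

theorem comp_homeomorph (hφ : IsTestFunction φ U) (e : E ≃ₜ E) (he : ContDiff ℝ (⊤ : ℕ∞) e) :
    IsTestFunction (φ ∘ e) (e ⁻¹' U) where
  contDiff := hφ.contDiff.comp he
  hasCompactSupport := hφ.hasCompactSupport.comp_homeomorph e
  tsupport_subset := (tsupport_comp_subset_preimage φ e.continuous).trans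
    (preimage_mono hφ.tsupport_subset)

theorem comp_homeomorph_symm {e : E ≃ₜ E} (hφ : IsTestFunction φ (e ⁻¹' U))
    (he : ContDiff ℝ (⊤ : ℕ∞) e.symm) : IsTestFunction (φ ∘ e.symm) U := by
  have hcomp := hφ.comp_homeomorph e.symm he
  rwa [← preimage_comp, e.self_comp_symm, preimage_id] at hcomp

theorem comp_id_add (hφ : IsTestFunction φ U) {g : E → E} (hg : ContDiff ℝ (⊤ : ℕ∞) g)
    (hgc : HasCompactSupport g) (hgU : tsupport g ⊆ U) :
    IsTestFunction (fun x => φ (x + g x)) U := by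
  have hsub : tsupport (fun x => φ (x + g x)) ⊆ tsupport φ ∪ tsupport g := by
    refine closure_minimal (fun x hx => ?_) ((isClosed_tsupport φ).union (isClosed_tsupport g))
    by_cases hgx : g x = 0
    · refine Or.inl (subset_tsupport φ ?_)
      simpa [hgx] using hx
    · exact Or.inr (subset_tsupport g hgx)
  exact ⟨hφ.contDiff.comp (contDiff_id.add hg),
    (hφ.hasCompactSupport.isCompact.union hgc.isCompact).of_isClosed_subset
      (isClosed_tsupport _) hsub,
    hsub.trans (union_subset hφ.tsupport_subset hgU)⟩

section Integrability

variable [MeasureSpace E] [BorelSpace E] [IsFiniteMeasureOnCompacts (volume : Measure E)] {p : ℝ}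

theorem integrable_abs_rpow (hφ : IsTestFunction φ U) (hp : 1 ≤ p) :
    Integrable fun x => |φ x| ^ p :=
  integrable_norm_rpow_of_hasCompactSupport hφ.contDiff.continuous hφ.hasCompactSupport
    (zero_lt_one.trans_le hp)

theorem integrable_norm_fderiv_rpow (hφ : IsTestFunction φ U) (hp : 1 ≤ p) :
    Integrable fun x => ‖fderiv ℝ φ x‖ ^ p :=
  integrable_norm_rpow_of_hasCompactSupport hφ.continuous_fderiv
    (hφ.hasCompactSupport.fderiv (𝕜 := ℝ)) (zero_lt_one.trans_le hp)

end Integrability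

end IsTestFunction

end TestFunctions

theorem exists_isTestFunction_eq_one {E : Type*} [NormedAddCommGroup E] [NormedSpace ℝ E]
    [FiniteDimensional ℝ E] {K U : Set E} (hK : IsCompact K) (hU : IsOpen U) (hKU : K ⊆ U) :
    ∃ η : E → ℝ, IsTestFunction η U ∧ (∀ x ∈ K, η x = 1) ∧ ∀ x, η x ∈ Icc (0 : ℝ) 1 := by
  obtain ⟨L, hL, hKL, hLU⟩ := exists_compact_between hK hU hKU
  obtain ⟨η, hη, hη01, hsupp, hη1⟩ := exists_contMDiff_support_eq_eq_one_iff
    (modelWithCornersSelf ℝ E) (n := ⊤) isOpen_interior hK.isClosed hKL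
  have htsupp : tsupport η ⊆ L :=
    closure_minimal (hsupp.trans_subset interior_subset) hL.isClosed
  exact ⟨η, ⟨hη.contDiff, hL.of_isClosed_subset (isClosed_tsupport η) htsupp, htsupp.trans hLU⟩,
    fun x hx => (hη1 x).1 hx, fun x => hη01 (mem_range_self x)⟩

/-- The `p`-Dirichlet energy `∫ |∇φ|^p`, the functional minimised in `pCapacity` and `lambdaP`. -/
def dirichletEnergy {E : Type*} [NormedAddCommGroup E] [NormedSpace ℝ E] [MeasureSpace E]
    (p : ℝ) (φ : E → ℝ) : ℝ :=
  ∫ x, ‖fderiv ℝ φ x‖ ^ p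

section DirichletEnergy

variable {E : Type*} [NormedAddCommGroup E] [NormedSpace ℝ E] [MeasureSpace E] {p : ℝ}
  {φ u f : E → ℝ}

theorem dirichletEnergy_nonneg (p : ℝ) (φ : E → ℝ) : 0 ≤ dirichletEnergy p φ :=
  integral_nonneg fun _ => by positivity

theorem dirichletEnergy_const_mul (hφ : Differentiable ℝ φ) (k : ℝ) :
    dirichletEnergy p (fun x => k * φ x) = |k| ^ p * dirichletEnergy p φ := by
  simp_rw [dirichletEnergy, ← integral_const_mul]
  congr with x
  rw [fderiv_const_mul (hφ x), norm_smul, Real.mul_rpow (norm_nonneg _) (norm_nonneg _),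
    Real.norm_eq_abs]

theorem dirichletEnergy_mono (hp : 0 ≤ p) (hu : Integrable fun x => ‖fderiv ℝ u x‖ ^ p)
    (h : ∀ x, ‖fderiv ℝ f x‖ ≤ ‖fderiv ℝ u x‖) : dirichletEnergy p f ≤ dirichletEnergy p u :=
  integral_mono_of_nonneg (.of_forall fun _ => by positivity) hu
    (.of_forall fun x => Real.rpow_le_rpow (norm_nonneg _) (h x) hp)

-- Convexity of `t ↦ t ^ p` at the point `(1 - s) * (x / (1 - s)) + s * (y / s)`.
theorem rpow_add_le_weighted {s x y : ℝ} (hp : 1 ≤ p) (hs : s ∈ Ioo (0 : ℝ) 1) (hx : 0 ≤ x)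
    (hy : 0 ≤ y) : (x + y) ^ p ≤ (1 - s) ^ (1 - p) * x ^ p + s ^ (1 - p) * y ^ p := by
  obtain ⟨hs0, hs1⟩ := hs
  have hs1' : 0 < 1 - s := sub_pos.2 hs1
  have hconv := (convexOn_rpow hp).2 (mem_Ici.2 (div_nonneg hx hs1'.le))
    (mem_Ici.2 (div_nonneg hy hs0.le)) hs1'.le hs0.le (by ring)
  simp only [smul_eq_mul] at hconv
  rw [mul_div_cancel₀ _ hs1'.ne', mul_div_cancel₀ _ hs0.ne', Real.div_rpow hx hs1'.le,
    Real.div_rpow hy hs0.le] at hconv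
  refine hconv.trans_eq ?_
  rw [Real.rpow_sub hs1', Real.rpow_sub hs0, Real.rpow_one, Real.rpow_one]
  ring

theorem dirichletEnergy_le_of_norm_fderiv_le_add {g : E → ℝ} {s : ℝ} (hp : 1 ≤ p)
    (hs : s ∈ Ioo (0 : ℝ) 1) (hu : Integrable fun x => ‖fderiv ℝ u x‖ ^ p)
    (hg : Integrable fun x => g x ^ p) (hg0 : ∀ x, 0 ≤ g x)
    (h : ∀ x, ‖fderiv ℝ f x‖ ≤ ‖fderiv ℝ u x‖ + g x) :
    dirichletEnergy p f ≤
      (1 - s) ^ (1 - p) * dirichletEnergy p u + s ^ (1 - p) * ∫ x, g x ^ p := by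
  rw [dirichletEnergy, dirichletEnergy, ← integral_const_mul, ← integral_const_mul,
    ← integral_add (hu.const_mul _) (hg.const_mul _)]
  refine integral_mono_of_nonneg (.of_forall fun _ => by positivity)
    ((hu.const_mul _).add (hg.const_mul _)) (.of_forall fun x => ?_)
  exact (Real.rpow_le_rpow (norm_nonneg _) (h x) (by linarith)).trans
    (rpow_add_le_weighted hp hs (norm_nonneg _) (hg0 x))

end DirichletEnergy

section ChangeOfVariables

variable {E : Type*} [NormedAddCommGroup E] [NormedSpace ℝ E]

theorem eventually_injective_and_fderiv_id_add_smul {g : E → E} (hg : ContDiff ℝ 1 g)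
    (hgc : HasCompactSupport g) {ε : ℝ} (hε : 0 < ε) :
    ∀ᶠ t in 𝓝 (0 : ℝ), (fun x => x + t • g x).Injective ∧
      ∀ x, ‖fderiv ℝ (fun x => x + t • g x) x‖ ≤ 1 + ε ∧
        1 - ε ≤ |(fderiv ℝ (fun x => x + t • g x) x).det| := by
  obtain ⟨C, hC⟩ := hg.lipschitzWith_of_hasCompactSupport hgc one_ne_zero
  obtain ⟨δ, hδ, hδε⟩ : ∃ δ > 0, ∀ A : E →L[ℝ] E, dist A (.id ℝ E) < δ →
      ‖A‖ < 1 + ε ∧ 1 - ε < |A.det| := by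
    refine Metric.eventually_nhds_iff.1 (Filter.Eventually.and ?_ ?_)
    · refine continuous_norm.continuousAt.eventually_lt continuousAt_const ?_
      linarith [ContinuousLinearMap.norm_id_le (𝕜 := ℝ) (E := E)]
    · refine continuousAt_const.eventually_lt
        ContinuousLinearMap.continuous_det.abs.continuousAt ?_
      simp [ContinuousLinearMap.det, hε]
  have hsmall : ∀ᶠ t in 𝓝 (0 : ℝ), |t| * C < min δ 1 := by
    refine ContinuousAt.eventually_lt (by fun_prop) continuousAt_const ?_
    simp [hδ]
  filter_upwards [hsmall] with t ht
  have hLip : LipschitzWith (‖t‖₊ * C) fun x => t • g x := (lipschitzWith_smul t).comp hC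
  refine ⟨?_, fun x => ?_⟩
  · refine (AntilipschitzWith.id.add_lipschitzWith hLip ?_).injective
    rw [inv_one, ← NNReal.coe_lt_coe]
    simpa using ht.trans_le (min_le_right _ _)
  · have hder : fderiv ℝ (fun x => x + t • g x) x = .id ℝ E + t • fderiv ℝ g x :=
      ((hasFDerivAt_id x).add
        ((hg.differentiable one_ne_zero x).hasFDerivAt.const_smul t)).fderiv
    have hdist : dist (fderiv ℝ (fun x => x + t • g x) x) (.id ℝ E) < δ := by
      rw [hder, dist_eq_norm, add_sub_cancel_left, norm_smul, Real.norm_eq_abs]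
      exact (mul_le_mul_of_nonneg_left (norm_fderiv_le_of_lipschitz ℝ hC) (abs_nonneg t)).trans_lt
        (ht.trans_le (min_le_left _ _))
    exact ⟨(hδε _ hdist).1.le, (hδε _ hdist).2.le⟩

variable [FiniteDimensional ℝ E] [MeasureSpace E] [BorelSpace E]
  [(volume : Measure E).IsAddHaarMeasure] {p : ℝ} {φ : E → ℝ}

theorem mul_dirichletEnergy_comp_le {Φ : E → E} {a b : ℝ} (hp : 0 ≤ p)
    (hφ : Differentiable ℝ φ) (hφi : Integrable fun x => ‖fderiv ℝ φ x‖ ^ p)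
    (hΦ : Differentiable ℝ Φ) (hinj : Φ.Injective) (ha : ∀ x, ‖fderiv ℝ Φ x‖ ≤ a) (hb0 : 0 ≤ b)
    (hb : ∀ x, b ≤ |(fderiv ℝ Φ x).det|) :
    b * dirichletEnergy p (φ ∘ Φ) ≤ a ^ p * dirichletEnergy p φ := by
  have ha0 : 0 ≤ a := (norm_nonneg _).trans (ha 0)
  have hΦ' : ∀ x ∈ univ, HasFDerivWithinAt Φ (fderiv ℝ Φ x) univ x :=
    fun x _ => (hΦ x).hasFDerivAt.hasFDerivWithinAt
  have hchain : ∀ x, ‖fderiv ℝ (φ ∘ Φ) x‖ ^ p ≤ a ^ p * ‖fderiv ℝ φ (Φ x)‖ ^ p := fun x => by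
    rw [fderiv_comp x (hφ _) (hΦ x), ← Real.mul_rpow ha0 (norm_nonneg _), mul_comm a]
    refine Real.rpow_le_rpow (norm_nonneg _) ?_ hp
    exact (ContinuousLinearMap.opNorm_comp_le _ _).trans (by gcongr; exact ha x)
  have hJi : Integrable fun x => |(fderiv ℝ Φ x).det| • ‖fderiv ℝ φ (Φ x)‖ ^ p :=
    integrableOn_univ.1 ((integrableOn_image_iff_integrableOn_abs_det_fderiv_smul volume .univ hΦ'
      hinj.injOn fun y => ‖fderiv ℝ φ y‖ ^ p).1 hφi.integrableOn)
  calc b * dirichletEnergy p (φ ∘ Φ) = ∫ x, b * ‖fderiv ℝ (φ ∘ Φ) x‖ ^ p :=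
        (integral_const_mul _ _).symm
    _ ≤ ∫ x, a ^ p * (|(fderiv ℝ Φ x).det| • ‖fderiv ℝ φ (Φ x)‖ ^ p) := by
        refine integral_mono_of_nonneg (.of_forall fun _ => by positivity) (hJi.const_mul _)
          (.of_forall fun x => ?_)
        calc b * ‖fderiv ℝ (φ ∘ Φ) x‖ ^ p
            ≤ |(fderiv ℝ Φ x).det| * (a ^ p * ‖fderiv ℝ φ (Φ x)‖ ^ p) := by
              gcongr
              exacts [hb x, hchain x]
          _ = _ := mul_left_comm _ _ _
    _ = a ^ p * ∫ y in Φ '' univ, ‖fderiv ℝ φ y‖ ^ p := by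
        rw [integral_const_mul, integral_image_eq_integral_abs_det_fderiv_smul volume .univ hΦ'
          hinj.injOn, setIntegral_univ]
    _ ≤ a ^ p * dirichletEnergy p φ := by
        gcongr
        exact setIntegral_le_integral hφi (.of_forall fun _ => by positivity)

theorem integral_comp_smul_add {F : Type*} [NormedAddCommGroup F] [NormedSpace ℝ F] (f : E → F)
    (x₀ : E) {r : ℝ} (hr : 0 ≤ r) :
    ∫ y, f (r • y + x₀) = (r ^ Module.finrank ℝ E)⁻¹ • ∫ x, f x := by
  rw [Measure.integral_comp_smul volume (fun z => f (z + x₀)) r, integral_add_right_eq_self,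
    abs_of_nonneg (by positivity)]

theorem dirichletEnergy_comp_smul_add (φ : E → ℝ) (x₀ : E) {r : ℝ} (hr : 0 ≤ r) :
    dirichletEnergy p (fun y => φ (r • y + x₀)) =
      r ^ p * (r ^ Module.finrank ℝ E)⁻¹ * dirichletEnergy p φ := by
  have hder : ∀ y, ‖fderiv ℝ (fun y => φ (r • y + x₀)) y‖ ^ p =
      r ^ p * ‖fderiv ℝ φ (r • y + x₀)‖ ^ p := fun y => by
    rw [fderiv_comp_smul (f := fun z => φ (z + x₀)), fderiv_comp_add_right, norm_smul,
      Real.norm_of_nonneg hr, Real.mul_rpow hr (norm_nonneg _)]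
  simp_rw [dirichletEnergy, hder, integral_const_mul]
  rw [integral_comp_smul_add (fun x => ‖fderiv ℝ φ x‖ ^ p) x₀ hr, smul_eq_mul, mul_assoc]

end ChangeOfVariables

section Translation

variable {E : Type*} [NormedAddCommGroup E] [NormedSpace ℝ E] {p : ℝ} {φ : E → ℝ}

-- The fundamental theorem of calculus on the segment, then Jensen's inequality.
theorem abs_sub_rpow_le_integral_norm_fderiv (hp : 1 ≤ p) (hφ : ContDiff ℝ 1 φ) (x v : E) :
    |φ (x + v) - φ x| ^ p ≤ ‖v‖ ^ p * ∫ t in Ioc (0 : ℝ) 1, ‖fderiv ℝ φ (x + t • v)‖ ^ p := by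
  have hcont : Continuous fun t : ℝ => fderiv ℝ φ (x + t • v) :=
    (hφ.continuous_fderiv one_ne_zero).comp (by fun_prop)
  have hint : ∀ {g : ℝ → ℝ}, Continuous g → Integrable g (volume.restrict (Ioc 0 1)) :=
    fun hg => (hg.intervalIntegrable 0 1).1
  have hderiv : ∀ t ∈ uIcc (0 : ℝ) 1,
      HasDerivAt (fun t => φ (x + t • v)) (fderiv ℝ φ (x + t • v) v) t := fun t _ => by
    have hline : HasDerivAt (fun t : ℝ => x + t • v) v t := by
      simpa using ((hasDerivAt_id t).smul_const v).const_add x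
    exact (hφ.differentiable one_ne_zero _).hasFDerivAt.comp_hasDerivAt t hline
  have hftc : φ (x + v) - φ x = ∫ t in Ioc (0 : ℝ) 1, fderiv ℝ φ (x + t • v) v := by
    rw [← intervalIntegral.integral_of_le zero_le_one,
      intervalIntegral.integral_eq_sub_of_hasDerivAt hderiv
        ((hcont.clm_apply continuous_const).intervalIntegrable _ _)]
    simp
  have hnorm : |φ (x + v) - φ x| ≤ ∫ t in Ioc (0 : ℝ) 1, ‖v‖ * ‖fderiv ℝ φ (x + t • v)‖ := by
    rw [hftc, ← Real.norm_eq_abs]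
    refine norm_integral_le_of_norm_le (hint (by fun_prop)) (.of_forall fun t => ?_)
    exact ((fderiv ℝ φ (x + t • v)).le_opNorm v).trans_eq (mul_comm _ _)
  have : IsProbabilityMeasure (volume.restrict (Ioc (0 : ℝ) 1)) := ⟨by simp⟩
  calc |φ (x + v) - φ x| ^ p
      ≤ (∫ t in Ioc (0 : ℝ) 1, ‖v‖ * ‖fderiv ℝ φ (x + t • v)‖) ^ p := by gcongr
    _ ≤ ∫ t in Ioc (0 : ℝ) 1, (‖v‖ * ‖fderiv ℝ φ (x + t • v)‖) ^ p :=
        (convexOn_rpow hp).map_integral_le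
          (Real.continuous_rpow_const (by linarith)).continuousOn isClosed_Ici
          (.of_forall fun t => mem_Ici.2 (by positivity)) (hint (by fun_prop))
          (hint (Continuous.rpow_const (by fun_prop) fun _ => Or.inr (by linarith)))
    _ = _ := by
        rw [← integral_const_mul]
        simp_rw [Real.mul_rpow (norm_nonneg v) (norm_nonneg _)]

variable [FiniteDimensional ℝ E] [MeasureSpace E] [BorelSpace E]
  [(volume : Measure E).IsAddHaarMeasure] {U : Set E}

theorem IsTestFunction.integral_abs_sub_rpow_le (hφ : IsTestFunction φ U) (hp : 1 ≤ p) (v : E) :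
    ∫ x, |φ (x + v) - φ x| ^ p ≤ ‖v‖ ^ p * dirichletEnergy p φ := by
  have hφ1 : ContDiff ℝ 1 φ := hφ.contDiff.of_le (by simp)
  have hfi := hφ.integrable_norm_fderiv_rpow hp
  set f : E → ℝ := fun x => ‖fderiv ℝ φ x‖ ^ p
  have hfc : Continuous f := hφ.continuous_fderiv.norm.rpow_const fun _ => Or.inr (by linarith)
  have htrans : ∀ w : E, ∫ x, f (x + w) = dirichletEnergy p φ := integral_add_right_eq_self f
  have hprod : Integrable (fun z : E × ℝ => f (z.1 + z.2 • v))
      (volume.prod (volume.restrict (Ioc 0 1))) := by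
    refine (integrable_prod_iff' (hfc.comp (by fun_prop)).aestronglyMeasurable).2
      ⟨.of_forall fun t => hfi.comp_add_right (t • v), ?_⟩
    have hnorm : ∀ x, ‖f x‖ = f x := fun x => Real.norm_of_nonneg (by positivity)
    simp only [Function.comp_apply, hnorm, htrans, integrable_const]
  calc ∫ x, |φ (x + v) - φ x| ^ p
      ≤ ∫ x, ‖v‖ ^ p * ∫ t in Ioc (0 : ℝ) 1, f (x + t • v) :=
        integral_mono_of_nonneg (.of_forall fun _ => by positivity)
          (hprod.integral_prod_left.const_mul _)
          (.of_forall fun x => abs_sub_rpow_le_integral_norm_fderiv hp hφ1 x v)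
    _ = ‖v‖ ^ p * dirichletEnergy p φ := by
        rw [integral_const_mul, integral_integral_swap hprod]
        simp [htrans]

theorem IsTestFunction.setIntegral_abs_rpow_le (hφ : IsTestFunction φ U) (hp : 1 ≤ p)
    {K : Set E} (hK : MeasurableSet K) {v : E} (hv : ∀ x ∈ K, φ (x + v) = 0) :
    ∫ x in K, |φ x| ^ p ≤ ‖v‖ ^ p * dirichletEnergy p φ := by
  have hint : Integrable fun x => |φ (x + v) - φ x| ^ p := by
    have hcomp := hφ.hasCompactSupport.comp_homeomorph (Homeomorph.addRight v)
    exact integrable_norm_rpow_of_hasCompactSupport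
      ((hφ.contDiff.continuous.comp (by fun_prop)).sub hφ.contDiff.continuous)
      (hcomp.sub hφ.hasCompactSupport) (by linarith)
  calc ∫ x in K, |φ x| ^ p = ∫ x in K, |φ (x + v) - φ x| ^ p :=
        setIntegral_congr_fun hK fun x hx => by simp [hv x hx]
    _ ≤ ∫ x, |φ (x + v) - φ x| ^ p :=
        setIntegral_le_integral hint (.of_forall fun _ => by positivity)
    _ ≤ ‖v‖ ^ p * dirichletEnergy p φ := hφ.integral_abs_sub_rpow_le hp v

end Translation

section Capacity

variable {N : ℕ} {p a c : ℝ} {K U : Set (EuclideanSpace ℝ (Fin N))}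
  {φ : EuclideanSpace ℝ (Fin N) → ℝ}

theorem pCapacity_eq_sInf_image (p : ℝ) (K U : Set (EuclideanSpace ℝ (Fin N))) :
    pCapacity p K U =
      sInf (dirichletEnergy p '' {φ | IsTestFunction φ U ∧ ∀ x ∈ K, 1 ≤ φ x}) := by
  refine congrArg sInf (ext fun c => ⟨?_, ?_⟩)
  · rintro ⟨φ, hφ, hφc, hφU, hφ1, rfl⟩
    exact ⟨φ, ⟨⟨hφ, hφc, hφU⟩, hφ1⟩, rfl⟩
  · rintro ⟨φ, ⟨hφ, hφ1⟩, rfl⟩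
    exact ⟨φ, hφ.contDiff, hφ.hasCompactSupport, hφ.tsupport_subset, hφ1, rfl⟩

theorem pCapacity_le (hφ : IsTestFunction φ U) (h : ∀ x ∈ K, 1 ≤ φ x) :
    pCapacity p K U ≤ dirichletEnergy p φ := by
  rw [pCapacity_eq_sInf_image]
  exact csInf_le ⟨0, forall_mem_image.2 fun ψ _ => dirichletEnergy_nonneg p ψ⟩
    (mem_image_of_mem _ ⟨hφ, h⟩)

theorem pCapacity_nonneg : 0 ≤ pCapacity p K U := by
  rw [pCapacity_eq_sInf_image]
  exact Real.sInf_nonneg (forall_mem_image.2 fun ψ _ => dirichletEnergy_nonneg p ψ)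

theorem exists_dirichletEnergy_lt_of_pCapacity_lt (hK : IsCompact K) (hU : IsOpen U)
    (hKU : K ⊆ U) (h : pCapacity p K U < c) :
    ∃ φ, IsTestFunction φ U ∧ (∀ x ∈ K, 1 ≤ φ x) ∧ dirichletEnergy p φ < c := by
  obtain ⟨η, hη, hη1, -⟩ := exists_isTestFunction_eq_one hK hU hKU
  have hne : {φ | IsTestFunction φ U ∧ ∀ x ∈ K, 1 ≤ φ x}.Nonempty :=
    ⟨η, hη, fun x hx => (hη1 x hx).ge⟩
  rw [pCapacity_eq_sInf_image] at h
  obtain ⟨_, ⟨φ, ⟨hφ, hφ1⟩, rfl⟩, hlt⟩ := exists_lt_of_csInf_lt (hne.image _) h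
  exact ⟨φ, hφ, hφ1, hlt⟩

theorem le_pCapacity (hK : IsCompact K) (hU : IsOpen U) (hKU : K ⊆ U)
    (h : ∀ φ, IsTestFunction φ U → (∀ x ∈ K, 1 ≤ φ x) → c ≤ dirichletEnergy p φ) :
    c ≤ pCapacity p K U := by
  by_contra! hlt
  obtain ⟨φ, hφ, hφ1, hφc⟩ := exists_dirichletEnergy_lt_of_pCapacity_lt hK hU hKU hlt
  exact (h φ hφ hφ1).not_gt hφc

theorem rpow_mul_pCapacity_le (hφ : IsTestFunction φ U) (ha : 0 < a) (h : ∀ x ∈ K, a ≤ φ x) :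
    a ^ p * pCapacity p K U ≤ dirichletEnergy p φ := by
  have hle : pCapacity p K U ≤ dirichletEnergy p fun x => a⁻¹ * φ x :=
    pCapacity_le (hφ.const_mul a⁻¹) fun x hx => (le_inv_mul_iff₀ ha).2 (by simpa using h x hx)
  rwa [dirichletEnergy_const_mul hφ.differentiable, abs_of_pos (inv_pos.2 ha),
    Real.inv_rpow ha.le, le_inv_mul_iff₀ (by positivity)] at hle

theorem pCapacity_pos [NeZero N] (hp : 1 ≤ p) (hK : IsCompact K) (hU : IsOpen U)
    (hUb : Bornology.IsBounded U) (hKU : K ⊆ U) (hK0 : 0 < volume.real K) :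
    0 < pCapacity p K U := by
  obtain ⟨R, hR, hUR⟩ := hUb.subset_ball_lt 0 0
  obtain ⟨v, hv⟩ := NormedSpace.exists_lt_norm ℝ (EuclideanSpace ℝ (Fin N)) (2 * R)
  have hv0 : 0 < ‖v‖ := by linarith
  refine (by positivity : 0 < volume.real K / ‖v‖ ^ p).trans_le
    (le_pCapacity hK hU hKU fun φ hφ hφ1 => (div_le_iff₀' (by positivity)).2 ?_)
  have hshift : ∀ x ∈ K, φ (x + v) = 0 := fun x hx => hφ.eq_zero_of_notMem fun hxv => by
    have hx' := mem_ball_zero_iff.1 (hUR (hKU hx))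
    have hxv' := mem_ball_zero_iff.1 (hUR hxv)
    have hsub := norm_sub_le (x + v) x
    rw [add_sub_cancel_left] at hsub
    linarith
  calc volume.real K = ∫ _ in K, (1 : ℝ) := by simp
    _ ≤ ∫ x in K, |φ x| ^ p :=
        setIntegral_mono_on (integrableOn_const hK.measure_ne_top)
          (hφ.integrable_abs_rpow hp).integrableOn hK.measurableSet
          fun x hx => Real.one_le_rpow ((hφ1 x hx).trans (le_abs_self _)) (by linarith)
    _ ≤ ‖v‖ ^ p * dirichletEnergy p φ := hφ.setIntegral_abs_rpow_le hp hK.measurableSet hshift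

theorem pCapacity_closedBall_pos [NeZero N] {x₀ : EuclideanSpace ℝ (Fin N)} {r R : ℝ}
    (hp : 1 ≤ p) (hr : 0 < r) (hrR : r < R) :
    0 < pCapacity p (closedBall x₀ r) (ball x₀ R) :=
  pCapacity_pos hp (isCompact_closedBall _ _) isOpen_ball isBounded_ball
    (closedBall_subset_ball hrR)
    (ENNReal.toReal_pos (measure_closedBall_pos volume x₀ hr).ne' measure_closedBall_lt_top.ne)

end Capacity

section InnerContinuity

theorem exists_one_add_rpow_lt_mul_one_sub (p : ℝ) {A : ℝ} (hA : 1 < A) :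
    ∃ ε ∈ Ioo (0 : ℝ) 1, (1 + ε) ^ p < A * (1 - ε) := by
  have hcont : ContinuousAt (fun ε : ℝ => (1 + ε) ^ p) 0 :=
    ContinuousAt.rpow_const (by fun_prop) (by simp)
  have hlt : ∀ᶠ ε in 𝓝 (0 : ℝ), (1 + ε) ^ p < A * (1 - ε) :=
    hcont.eventually_lt (by fun_prop) (by simpa using hA)
  obtain ⟨ε, hε, hεA⟩ :=
    (Eventually.and (Ioo_mem_nhdsGT one_pos) (hlt.filter_mono nhdsWithin_le_nhds)).exists
  exact ⟨ε, hε, hεA⟩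

theorem exists_contraction_closedBall {E : Type*} [NormedAddCommGroup E] [NormedSpace ℝ E]
    [FiniteDimensional ℝ E] {x₀ : E} {r R ε : ℝ} (hr : 0 < r) (hrR : r < R) (hε : 0 < ε) :
    ∃ g : E → E, ContDiff ℝ (⊤ : ℕ∞) g ∧ HasCompactSupport g ∧ tsupport g ⊆ ball x₀ R ∧
      (fun x => x + g x).Injective ∧
      (∀ x, ‖fderiv ℝ (fun x => x + g x) x‖ ≤ 1 + ε ∧
        1 - ε ≤ |(fderiv ℝ (fun x => x + g x) x).det|) ∧
      ∃ ρ < r, MapsTo (fun x => x + g x) (closedBall x₀ r) (closedBall x₀ ρ) := by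
  obtain ⟨χ, hχ, hχ1, -⟩ := exists_isTestFunction_eq_one (isCompact_closedBall x₀ r)
    (isOpen_ball (x := x₀) (ε := R)) (closedBall_subset_ball hrR)
  have hg : ContDiff ℝ (⊤ : ℕ∞) fun x => χ x • (x₀ - x) :=
    hχ.contDiff.smul (contDiff_const.sub contDiff_id)
  have hgc : HasCompactSupport fun x => χ x • (x₀ - x) := hχ.hasCompactSupport.smul_right
  obtain ⟨t, ⟨ht0, ht1⟩, hinj, hder⟩ := (Eventually.and (Ioo_mem_nhdsGT one_pos)
    ((eventually_injective_and_fderiv_id_add_smul (hg.of_le (by simp)) hgc hε).filter_mono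
      nhdsWithin_le_nhds)).exists
  refine ⟨fun x => t • χ x • (x₀ - x), hg.const_smul t, hgc.smul_left,
    (tsupport_smul_subset_right (fun _ => t) _).trans
      ((tsupport_smul_subset_left χ _).trans hχ.tsupport_subset),
    hinj, hder, (1 - t) * r, by nlinarith, fun x hx => ?_⟩
  have hdil : x + t • χ x • (x₀ - x) - x₀ = (1 - t) • (x - x₀) := by
    rw [hχ1 x hx]
    module
  rw [mem_closedBall, dist_eq_norm, hdil, norm_smul, Real.norm_of_nonneg (by linarith)]
  exact mul_le_mul_of_nonneg_left (mem_closedBall_iff_norm.1 hx) (by linarith)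

-- A contraction of `closedBall x₀ r` close to the identity moves competitors of the smaller ball
-- to competitors of the larger one at almost no cost in energy.
theorem exists_pCapacity_closedBall_le_mul {N : ℕ} {x₀ : EuclideanSpace ℝ (Fin N)}
    {p A r R : ℝ} (hp : 1 ≤ p) (hr : 0 < r) (hrR : r < R) (hA : 1 < A) :
    ∃ ρ < r, pCapacity p (closedBall x₀ r) (ball x₀ R) ≤
      A * pCapacity p (closedBall x₀ ρ) (ball x₀ R) := by
  have hA0 : 0 < A := zero_lt_one.trans hA
  obtain ⟨ε, ⟨hε0, hε1⟩, hεA⟩ := exists_one_add_rpow_lt_mul_one_sub p hA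
  obtain ⟨g, hg, hgc, hgU, hinj, hder, ρ, hρ, hmaps⟩ :=
    exists_contraction_closedBall (x₀ := x₀) hr hrR hε0
  refine ⟨ρ, hρ, (div_le_iff₀' hA0).1 ?_⟩
  refine le_pCapacity (isCompact_closedBall _ _) isOpen_ball
    (closedBall_subset_ball (hρ.trans hrR)) fun φ hφ hφ1 => (div_le_iff₀' hA0).2 ?_
  have henergy : (1 - ε) * dirichletEnergy p (fun x => φ (x + g x)) ≤
      (1 + ε) ^ p * dirichletEnergy p φ :=
    mul_dirichletEnergy_comp_le (by linarith) hφ.differentiable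
      (hφ.integrable_norm_fderiv_rpow hp) (differentiable_id.add (hg.differentiable (by simp)))
      hinj (fun x => (hder x).1) (by linarith) fun x => (hder x).2
  calc pCapacity p (closedBall x₀ r) (ball x₀ R)
      ≤ dirichletEnergy p fun x => φ (x + g x) :=
        pCapacity_le (hφ.comp_id_add hg hgc hgU) fun x hx => hφ1 _ (hmaps hx)
    _ ≤ A * dirichletEnergy p φ := by
        have hφ0 := dirichletEnergy_nonneg p φ
        refine le_of_mul_le_mul_left (henergy.trans ?_) (sub_pos.2 hε1)
        nlinarith

end InnerContinuity

/-- A smooth approximation from above of `t ↦ (b - t)⁺`, vanishing for `t ≥ c` (where `b < c`).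
Adding `smoothTruncation b c` to the identity truncates from below at height about `b`. -/
def smoothTruncation (b c t : ℝ) : ℝ :=
  ∫ x in t..c, Real.smoothTransition ((c - x) / (c - b))

namespace smoothTruncation

variable {b c t : ℝ}

theorem contDiff_integrand (b c : ℝ) :
    ContDiff ℝ (⊤ : ℕ∞) fun x => Real.smoothTransition ((c - x) / (c - b)) :=
  Real.smoothTransition.contDiff.comp ((contDiff_const.sub contDiff_id).div_const _)

theorem hasDerivAt (b c t : ℝ) :
    HasDerivAt (smoothTruncation b c) (-Real.smoothTransition ((c - t) / (c - b))) t :=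
  have hs := (contDiff_integrand b c).continuous
  intervalIntegral.integral_hasDerivAt_left (hs.intervalIntegrable _ _)
    (hs.stronglyMeasurableAtFilter _ _) hs.continuousAt

theorem contDiff (b c : ℝ) : ContDiff ℝ (⊤ : ℕ∞) (smoothTruncation b c) := by
  refine contDiff_infty_iff_deriv.2 ⟨fun t => (hasDerivAt b c t).differentiableAt, ?_⟩
  rw [funext fun t => (hasDerivAt b c t).deriv]
  exact (contDiff_integrand b c).neg

theorem neg_deriv_mem_Icc (b c t : ℝ) : -deriv (smoothTruncation b c) t ∈ Icc (0 : ℝ) 1 := by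
  rw [(hasDerivAt b c t).deriv, neg_neg]
  exact ⟨Real.smoothTransition.nonneg _, Real.smoothTransition.le_one _⟩

theorem antitone (b c : ℝ) : Antitone (smoothTruncation b c) :=
  antitone_of_deriv_nonpos ((contDiff b c).differentiable (by simp)) fun t =>
    neg_nonneg.1 (neg_deriv_mem_Icc b c t).1

theorem monotone_add (b c : ℝ) : Monotone fun t => t + smoothTruncation b c t := by
  have hd : ∀ t, HasDerivAt (fun t => t + smoothTruncation b c t)
      (1 + deriv (smoothTruncation b c) t) t := fun t =>
    (hasDerivAt_id t).add ((contDiff b c).differentiable (by simp) t).hasDerivAt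
  refine monotone_of_deriv_nonneg (fun t => (hd t).differentiableAt) fun t => ?_
  rw [(hd t).deriv]
  linarith [(neg_deriv_mem_Icc b c t).2]

theorem eq_zero_of_le (hbc : b < c) (ht : c ≤ t) : smoothTruncation b c t = 0 := by
  refine intervalIntegral.integral_zero_ae (.of_forall fun x hx => ?_)
  rw [uIoc_of_ge ht] at hx
  exact Real.smoothTransition.zero_of_nonpos
    (div_nonpos_of_nonpos_of_nonneg (by linarith [hx.1]) (by linarith))

theorem nonneg (hbc : b < c) (t : ℝ) : 0 ≤ smoothTruncation b c t :=
  (eq_zero_of_le hbc (le_max_right t c)).ge.trans (antitone b c (le_max_left t c))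

theorem le_max (hbc : b < c) (t : ℝ) : smoothTruncation b c t ≤ max (c - t) 0 := by
  rcases le_total c t with h | h
  · simp [eq_zero_of_le hbc h]
  · have hle := monotone_add b c h
    simp only [eq_zero_of_le hbc le_rfl, add_zero] at hle
    exact le_max_of_le_left (by linarith)

theorem le_add_self (hbc : b < c) (t : ℝ) : b ≤ t + smoothTruncation b c t := by
  rcases le_total b t with h | h
  · linarith [nonneg hbc t]
  have hs := (contDiff_integrand b c).continuous
  have hlin : ∫ x in t..b, Real.smoothTransition ((c - x) / (c - b)) = b - t := by
    refine (intervalIntegral.integral_congr fun x hx => ?_).trans (integral_one (a := t))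
    rw [uIcc_of_le h] at hx
    exact Real.smoothTransition.one_of_one_le
      ((one_le_div (sub_pos.2 hbc)).2 (by linarith [hx.2]))
  have hadd : b - t + smoothTruncation b c b = smoothTruncation b c t := by
    rw [← hlin]
    exact intervalIntegral.integral_add_adjacent_intervals (hs.intervalIntegrable t b)
      (hs.intervalIntegrable b c)
  linarith [nonneg hbc b]

end smoothTruncation

section CutoffTruncation

variable {E : Type*} [NormedAddCommGroup E] [NormedSpace ℝ E] {b c p s : ℝ} {u η η₁ η₂ : E → ℝ}

theorem hasFDerivAt_mul_smoothTruncation {x : E} (hu : DifferentiableAt ℝ u x)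
    (hη : DifferentiableAt ℝ η x) :
    HasFDerivAt (fun x => η x * smoothTruncation b c (u x))
      ((η x * deriv (smoothTruncation b c) (u x)) • fderiv ℝ u x +
        smoothTruncation b c (u x) • fderiv ℝ η x) x := by
  have hF := ((smoothTruncation.contDiff b c).differentiable (by simp) (u x)).hasDerivAt
  rw [mul_smul]
  exact hη.hasFDerivAt.mul (hF.comp_hasFDerivAt x hu.hasFDerivAt)

theorem norm_smul_add_smoothTruncation_smul_le (hbc : b < c) {k t : ℝ} (hk : |k| ≤ 1)
    (A B : E →L[ℝ] ℝ) :
    ‖k • A + smoothTruncation b c t • B‖ ≤ ‖A‖ + smoothTruncation b c t * ‖B‖ := by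
  refine (norm_add_le _ _).trans (add_le_add ?_ ?_)
  · rw [norm_smul]
    exact mul_le_of_le_one_left (norm_nonneg _) hk
  · rw [norm_smul, Real.norm_of_nonneg (smoothTruncation.nonneg hbc _)]

theorem norm_fderiv_mul_smoothTruncation_le (hbc : b < c) {x : E} (hu : DifferentiableAt ℝ u x)
    (hη : DifferentiableAt ℝ η x) (hηx : η x ∈ Icc (0 : ℝ) 1) :
    ‖fderiv ℝ (fun x => η x * smoothTruncation b c (u x)) x‖ ≤
      ‖fderiv ℝ u x‖ + smoothTruncation b c (u x) * ‖fderiv ℝ η x‖ := by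
  have hD := smoothTruncation.neg_deriv_mem_Icc b c (u x)
  rw [(hasFDerivAt_mul_smoothTruncation hu hη).fderiv]
  refine norm_smul_add_smoothTruncation_smul_le hbc (abs_le.2 ?_) _ _
  constructor <;> nlinarith [hD.1, hD.2, hηx.1, hηx.2]

theorem norm_fderiv_add_mul_smoothTruncation_le (hbc : b < c) {x : E}
    (hu : DifferentiableAt ℝ u x) (hη : DifferentiableAt ℝ η x) (hηx : η x ∈ Icc (0 : ℝ) 1) :
    ‖fderiv ℝ (fun x => u x + η x * smoothTruncation b c (u x)) x‖ ≤
      ‖fderiv ℝ u x‖ + smoothTruncation b c (u x) * ‖fderiv ℝ η x‖ := by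
  have hD := smoothTruncation.neg_deriv_mem_Icc b c (u x)
  have hder := hasFDerivAt_mul_smoothTruncation (b := b) (c := c) hu hη
  rw [fderiv_fun_add hu hder.differentiableAt, hder.fderiv, ← add_assoc]
  nth_rw 1 [← one_smul ℝ (fderiv ℝ u x)]
  rw [← add_smul]
  refine norm_smul_add_smoothTruncation_smul_le hbc (abs_le.2 ?_) _ _
  constructor <;> nlinarith [hD.1, hD.2, hηx.1, hηx.2]

theorem IsTestFunction.mul_smoothTruncation {U Ω : Set E} (hbc : b < c)
    (hη : IsTestFunction η U) (hu : ContDiff ℝ (⊤ : ℕ∞) u) (h : ∀ x ∈ U \ Ω, c < u x) :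
    IsTestFunction (fun x => η x * smoothTruncation b c (u x)) Ω := by
  have htest := hη.mul_contDiff ((smoothTruncation.contDiff b c).comp hu)
  refine ⟨htest.contDiff, htest.hasCompactSupport, fun x hx => ?_⟩
  have hxc : x ∈ {x | u x ≤ c} := by
    refine closure_minimal (fun y hy => ?_) (isClosed_le hu.continuous continuous_const) hx
    by_contra hcy
    exact hy (by simp [smoothTruncation.eq_zero_of_le hbc (not_le.1 hcy).le])
  by_contra hxΩ
  exact (h x ⟨htest.tsupport_subset hx, hxΩ⟩).not_ge hxc

variable [MeasureSpace E] [BorelSpace E] [IsFiniteMeasureOnCompacts (volume : Measure E)]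
  {U V : Set E}

theorem IsTestFunction.exists_le_dirichletEnergy_le (hp : 1 ≤ p) (hu : IsTestFunction u U)
    (hb : b < 0) :
    ∃ w, IsTestFunction w U ∧ (∀ x, b ≤ w x) ∧ (∀ x, u x ≤ w x) ∧
      dirichletEnergy p w ≤ dirichletEnergy p u := by
  have hT : ContDiff ℝ (⊤ : ℕ∞) fun t => t + smoothTruncation b 0 t :=
    contDiff_id.add (smoothTruncation.contDiff b 0)
  refine ⟨_, hu.comp_left hT (by simp [smoothTruncation.eq_zero_of_le hb]),
    fun x => smoothTruncation.le_add_self hb _,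
    fun x => le_add_of_nonneg_right (smoothTruncation.nonneg hb _), ?_⟩
  refine dirichletEnergy_mono (by linarith) (hu.integrable_norm_fderiv_rpow hp) fun x => ?_
  simpa [Function.comp_def] using norm_fderiv_add_mul_smoothTruncation_le hb
    (hu.differentiable x) (differentiableAt_const (1 : ℝ)) (by simp)

theorem IsTestFunction.dirichletEnergy_mul_smoothTruncation_le {B : ℝ} (hp : 1 ≤ p)
    (hbc : b < c) (hu : IsTestFunction u U) (hη : IsTestFunction η V)
    (hη01 : ∀ x, η x ∈ Icc (0 : ℝ) 1) (hB : ∀ x, smoothTruncation b c (u x) ≤ B) :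
    dirichletEnergy p (fun x => η x * smoothTruncation b c (u x)) ≤
      (1 / 2) ^ (1 - p) * (dirichletEnergy p u + B ^ p * dirichletEnergy p η) := by
  have hB0 : 0 ≤ B := (smoothTruncation.nonneg hbc _).trans (hB 0)
  have hpow : ∀ x, (B * ‖fderiv ℝ η x‖) ^ p = B ^ p * ‖fderiv ℝ η x‖ ^ p := fun x =>
    Real.mul_rpow hB0 (norm_nonneg _)
  have hle := dirichletEnergy_le_of_norm_fderiv_le_add (s := 1 / 2)
    (f := fun x => η x * smoothTruncation b c (u x)) (g := fun x => B * ‖fderiv ℝ η x‖) hp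
    (by norm_num) (hu.integrable_norm_fderiv_rpow hp)
    (by simpa only [hpow] using (hη.integrable_norm_fderiv_rpow hp).const_mul _)
    (fun x => by positivity) fun x =>
      (norm_fderiv_mul_smoothTruncation_le hbc (hu.differentiable x) (hη.differentiable x)
        (hη01 x)).trans (by gcongr; exact hB x)
  refine hle.trans_eq ?_
  simp only [hpow, integral_const_mul, dirichletEnergy]
  norm_num
  ring

theorem IsTestFunction.dirichletEnergy_add_mul_smoothTruncation_le {L : ℝ} (hp : 1 ≤ p)
    (hs : s ∈ Ioo (0 : ℝ) 1) (hbc : b < c) (hu : IsTestFunction u U) (hη₁ : IsTestFunction η₁ V)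
    (hη₂ : Differentiable ℝ η₂) (hη₂01 : ∀ x, η₂ x ∈ Icc (0 : ℝ) 1)
    (hη : ∀ x ∈ tsupport η₂, η₁ x = 1) (hL : ∀ x, ‖fderiv ℝ η₂ x‖ ≤ L) :
    dirichletEnergy p (fun x => u x + η₂ x * smoothTruncation b c (u x)) ≤
      (1 - s) ^ (1 - p) * dirichletEnergy p u +
        s ^ (1 - p) * (L ^ p * ∫ x, |η₁ x * smoothTruncation b c (u x)| ^ p) := by
  have hL0 : 0 ≤ L := (norm_nonneg _).trans (hL 0)
  have hpow : ∀ x, (L * |η₁ x * smoothTruncation b c (u x)|) ^ p =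
      L ^ p * |η₁ x * smoothTruncation b c (u x)| ^ p := fun x =>
    Real.mul_rpow hL0 (abs_nonneg _)
  have hint : Integrable fun x => |η₁ x * smoothTruncation b c (u x)| ^ p :=
    (hη₁.mul_contDiff
      ((smoothTruncation.contDiff b c).comp hu.contDiff)).integrable_abs_rpow hp
  have hgrad : ∀ x, smoothTruncation b c (u x) * ‖fderiv ℝ η₂ x‖ ≤
      L * |η₁ x * smoothTruncation b c (u x)| := fun x => by
    by_cases hx : x ∈ tsupport η₂
    · rw [hη x hx, one_mul, abs_of_nonneg (smoothTruncation.nonneg hbc _), mul_comm]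
      exact mul_le_mul_of_nonneg_right (hL x) (smoothTruncation.nonneg hbc _)
    · rw [fderiv_of_notMem_tsupport ℝ hx, norm_zero, mul_zero]
      positivity
  rw [← integral_const_mul]
  simp only [← hpow]
  exact dirichletEnergy_le_of_norm_fderiv_le_add hp hs (hu.integrable_norm_fderiv_rpow hp)
    (by simpa only [hpow] using hint.const_mul _) (fun x => by positivity) fun x =>
      (norm_fderiv_add_mul_smoothTruncation_le hbc (hu.differentiable x) (hη₂ x)
        (hη₂01 x)).trans (add_le_add_right (hgrad x) _)

end CutoffTruncation

section CapacityScaling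

variable {N : ℕ} {p γ r : ℝ} {Ω : Set (EuclideanSpace ℝ (Fin N))}
  {x₀ : EuclideanSpace ℝ (Fin N)}

theorem pCapacity_preimage_smul_add (p : ℝ) (x₀ : EuclideanSpace ℝ (Fin N)) (hr : 0 < r)
    (K U : Set (EuclideanSpace ℝ (Fin N))) :
    pCapacity p ((fun y => r • y + x₀) ⁻¹' K) ((fun y => r • y + x₀) ⁻¹' U) =
      r ^ p * (r ^ N)⁻¹ * pCapacity p K U := by
  let e := (DilationEquiv.smulTorsor x₀ hr.ne').toHomeomorph
  have he : ContDiff ℝ (⊤ : ℕ∞) e := (contDiff_id.const_smul r).add contDiff_const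
  have he' : ContDiff ℝ (⊤ : ℕ∞) e.symm := (contDiff_id.sub contDiff_const).const_smul r⁻¹
  have henergy : ∀ φ : EuclideanSpace ℝ (Fin N) → ℝ,
      dirichletEnergy p (φ ∘ e) = r ^ p * (r ^ N)⁻¹ * dirichletEnergy p φ := fun φ => by
    simpa using! dirichletEnergy_comp_smul_add (p := p) φ x₀ hr.le
  change pCapacity p (e ⁻¹' K) (e ⁻¹' U) = _
  rw [pCapacity_eq_sInf_image, pCapacity_eq_sInf_image, ← smul_eq_mul,
    ← Real.sInf_smul_of_nonneg (by positivity), ← image_smul, image_image]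
  congr 1
  refine Subset.antisymm ?_ ?_
  · rintro _ ⟨φ, ⟨hφ, hφ1⟩, rfl⟩
    refine ⟨φ ∘ e.symm, ⟨hφ.comp_homeomorph_symm he', fun x hx => hφ1 _ (by simpa using hx)⟩, ?_⟩
    simp only [smul_eq_mul, ← henergy, Function.comp_assoc, e.symm_comp_self, Function.comp_id]
  · rintro _ ⟨φ, ⟨hφ, hφ1⟩, rfl⟩
    exact ⟨φ ∘ e, ⟨hφ.comp_homeomorph e he, fun x hx => hφ1 _ hx⟩, henergy φ⟩

theorem preimage_smul_add_closedBall {E : Type*} [NormedAddCommGroup E] [NormedSpace ℝ E] (x₀ : E)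
    (hr : 0 < r) (s : ℝ) : (fun y => r • y + x₀) ⁻¹' closedBall x₀ (s * r) = closedBall 0 s := by
  ext y
  simp [norm_smul, abs_of_pos hr, mul_comm s, hr]

theorem preimage_smul_add_ball {E : Type*} [NormedAddCommGroup E] [NormedSpace ℝ E] (x₀ : E)
    (hr : 0 < r) (s : ℝ) : (fun y => r • y + x₀) ⁻¹' ball x₀ (s * r) = ball 0 s := by
  ext y
  simp [norm_smul, abs_of_pos hr, mul_comm s, hr]

theorem IsNegligible.preimage_smul_add (h : IsNegligible p γ Ω x₀ r) (hr : 0 < r) :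
    IsNegligible p γ ((fun y => r • y + x₀) ⁻¹' Ω) 0 1 := by
  have hk : 0 ≤ r ^ p * (r ^ N)⁻¹ := by positivity
  rw [IsNegligible] at h ⊢
  rw [mul_one, ← preimage_smul_add_closedBall x₀ hr, ← preimage_smul_add_ball x₀ hr, one_mul,
    ← preimage_sdiff, pCapacity_preimage_smul_add p x₀ hr, pCapacity_preimage_smul_add p x₀ hr,
    mul_left_comm]
  exact mul_le_mul_of_nonneg_left h hk

end CapacityScaling

section NegligibleBall

variable {N : ℕ} {p : ℝ}

theorem exists_mul_rpow_one_sub_mul_lt (p : ℝ) {θ : ℝ} (hθ : θ < 1) :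
    ∃ ε ∈ Ioo (0 : ℝ) 1, (1 + ε) * (1 - ε) ^ (1 - p) * θ < (1 - ε) ^ p := by
  have hpow : ∀ q : ℝ, ContinuousAt (fun ε : ℝ => (1 - ε) ^ q) 0 := fun q =>
    ContinuousAt.rpow_const (by fun_prop) (by simp)
  have hlt : ∀ᶠ ε in 𝓝 (0 : ℝ), (1 + ε) * (1 - ε) ^ (1 - p) * θ < (1 - ε) ^ p :=
    ContinuousAt.eventually_lt (((continuousAt_const.add continuousAt_id).mul (hpow _)).mul
      continuousAt_const) (hpow p) (by simpa using hθ)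
  obtain ⟨ε, hε, hεp⟩ :=
    (Eventually.and (Ioo_mem_nhdsGT one_pos) (hlt.filter_mono nhdsWithin_le_nhds)).exists
  exact ⟨ε, hε, hεp⟩

theorem IsTestFunction.rpow_mul_pCapacity_le_add_integral
    {K U V : Set (EuclideanSpace ℝ (Fin N))} {u η₁ η₂ : EuclideanSpace ℝ (Fin N) → ℝ}
    {b c s L : ℝ} (hp : 1 ≤ p) (hs : s ∈ Ioo (0 : ℝ) 1) (hb : 0 < b) (hbc : b < c)
    (hu : IsTestFunction u U) (hη₁ : IsTestFunction η₁ V) (hη₂ : IsTestFunction η₂ U)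
    (hη₂01 : ∀ x, η₂ x ∈ Icc (0 : ℝ) 1) (hη₂K : ∀ x ∈ K, η₂ x = 1)
    (hη : ∀ x ∈ tsupport η₂, η₁ x = 1) (hL : ∀ x, ‖fderiv ℝ η₂ x‖ ≤ L) :
    b ^ p * pCapacity p K U ≤ (1 - s) ^ (1 - p) * dirichletEnergy p u +
      s ^ (1 - p) * (L ^ p * ∫ x, |η₁ x * smoothTruncation b c (u x)| ^ p) :=
  (rpow_mul_pCapacity_le
    (hu.add (hη₂.mul_contDiff ((smoothTruncation.contDiff b c).comp hu.contDiff))) hb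
    fun x hx => by simpa [hη₂K x hx] using smoothTruncation.le_add_self hbc (u x)).trans
  (hu.dirichletEnergy_add_mul_smoothTruncation_le hp hs hbc hη₁ hη₂.differentiable hη₂01 hη hL)

-- If the truncation had little mass, adding it to `u` near a slightly smaller ball would give a
-- competitor for that ball with little more energy than `u`, contradicting inner continuity.
theorem exists_le_integral_mul_smoothTruncation [NeZero N] {x₀ : EuclideanSpace ℝ (Fin N)}
    {r R θ : ℝ} (hp : 1 ≤ p) (hr : 0 < r) (hrR : r < R) (hθ : θ < 1) :
    ∃ b c : ℝ, b < c ∧ c < 1 ∧ ∃ η, IsTestFunction η (ball x₀ r) ∧ (∀ x, η x ∈ Icc (0 : ℝ) 1) ∧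
      ∃ m > 0, ∀ u, IsTestFunction u (ball x₀ R) →
        dirichletEnergy p u ≤ θ * pCapacity p (closedBall x₀ r) (ball x₀ R) →
        m ≤ ∫ x, |η x * smoothTruncation b c (u x)| ^ p := by
  obtain ⟨ε, ⟨hε0, hε1⟩, hεθ⟩ := exists_mul_rpow_one_sub_mul_lt p hθ
  obtain ⟨ρ, hρr, hcap⟩ := exists_pCapacity_closedBall_le_mul (x₀ := x₀) hp hr hrR
    (lt_add_of_pos_right 1 hε0)
  obtain ⟨η₂, hη₂, hη₂1, hη₂01⟩ := exists_isTestFunction_eq_one (isCompact_closedBall x₀ ρ)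
    (isOpen_ball (x := x₀) (ε := r)) (closedBall_subset_ball hρr)
  obtain ⟨η₁, hη₁, hη₁1, hη₁01⟩ := exists_isTestFunction_eq_one hη₂.hasCompactSupport.isCompact
    isOpen_ball hη₂.tsupport_subset
  obtain ⟨L, hL0, hL⟩ := hη₂.exists_norm_fderiv_le
  have hc₁ : 0 < pCapacity p (closedBall x₀ r) (ball x₀ R) :=
    pCapacity_closedBall_pos hp hr hrR
  set c₁ := pCapacity p (closedBall x₀ r) (ball x₀ R)
  set δ := (1 - ε) ^ p - (1 + ε) * (1 - ε) ^ (1 - p) * θ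
  have : 0 < δ := sub_pos.2 hεθ
  refine ⟨1 - ε, 1 - ε / 2, by linarith, by linarith, η₁, hη₁, hη₁01,
    δ * c₁ / ((1 + ε) * (ε ^ (1 - p) * L ^ p)), by positivity, fun u hu hE => ?_⟩
  set I := ∫ x, |η₁ x * smoothTruncation (1 - ε) (1 - ε / 2) (u x)| ^ p
  have hmass : (1 - ε) ^ p * pCapacity p (closedBall x₀ ρ) (ball x₀ R) ≤
      (1 - ε) ^ (1 - p) * dirichletEnergy p u + ε ^ (1 - p) * (L ^ p * I) :=
    hu.rpow_mul_pCapacity_le_add_integral hp ⟨hε0, hε1⟩ (by linarith) (by linarith) hη₁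
      (hη₂.mono (ball_subset_ball hrR.le)) hη₂01 hη₂1 hη₁1 hL
  rw [div_le_iff₀' (by positivity)]
  have : 0 < (1 - ε) ^ (1 - p) := Real.rpow_pos_of_pos (sub_pos.2 hε1) _
  have : 0 < (1 - ε) ^ p := Real.rpow_pos_of_pos (sub_pos.2 hε1) _
  have hchain : (1 - ε) ^ p * c₁ ≤ (1 + ε) * ((1 - ε) ^ (1 - p) * (θ * c₁) +
      ε ^ (1 - p) * (L ^ p * I)) :=
    calc (1 - ε) ^ p * c₁
        ≤ (1 - ε) ^ p * ((1 + ε) * pCapacity p (closedBall x₀ ρ) (ball x₀ R)) := by gcongr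
      _ = (1 + ε) * ((1 - ε) ^ p * pCapacity p (closedBall x₀ ρ) (ball x₀ R)) := by ring
      _ ≤ (1 + ε) * ((1 - ε) ^ (1 - p) * dirichletEnergy p u +
            ε ^ (1 - p) * (L ^ p * I)) := by gcongr
      _ ≤ _ := by gcongr
  linear_combination hchain

theorem exists_isTestFunction_dirichletEnergy_le [NeZero N] {γ r : ℝ} (hp : 1 ≤ p) (hγ : γ < 1)
    (x₀ : EuclideanSpace ℝ (Fin N)) (hr : 0 < r) :
    ∃ M > 0, ∀ Ω : Set (EuclideanSpace ℝ (Fin N)), IsOpen Ω → IsNegligible p γ Ω x₀ r →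
      ∃ ψ, IsTestFunction ψ Ω ∧ 0 < ∫ x, |ψ x| ^ p ∧
        dirichletEnergy p ψ ≤ M * ∫ x, |ψ x| ^ p := by
  have hr2 : r < 2 * r := by linarith
  obtain ⟨θ, hγθ, hθ1⟩ := exists_between hγ
  obtain ⟨b, c, hbc, hc1, η, hη, hη01, m, hm, hmass⟩ :=
    exists_le_integral_mul_smoothTruncation (x₀ := x₀) hp hr hr2 hθ1
  have hc₁ : 0 < pCapacity p (closedBall x₀ r) (ball x₀ (2 * r)) :=
    pCapacity_closedBall_pos hp hr hr2
  set c₁ := pCapacity p (closedBall x₀ r) (ball x₀ (2 * r))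
  have hEη := dirichletEnergy_nonneg p η
  set A := (1 / 2) ^ (1 - p) * (c₁ + 2 ^ p * dirichletEnergy p η)
  have : 0 < A := by positivity
  refine ⟨A / m, by positivity, fun Ω hΩ hneg => ?_⟩
  obtain ⟨φ, hφ, hφ1, hφE⟩ := exists_dirichletEnergy_lt_of_pCapacity_lt
    ((isCompact_closedBall x₀ r).diff hΩ) isOpen_ball
    (sdiff_subset.trans (closedBall_subset_ball hr2))
    (hneg.trans_lt (mul_lt_mul_of_pos_right hγθ hc₁))
  obtain ⟨u, hu, hu1, hφu, huE⟩ := hφ.exists_le_dirichletEnergy_le hp (neg_one_lt_zero (R := ℝ))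
  have hm' := hmass u hu (huE.trans hφE.le)
  have hEu : dirichletEnergy p u ≤ c₁ :=
    (huE.trans hφE.le).trans (mul_le_of_le_one_left hc₁.le hθ1.le)
  refine ⟨fun x => η x * smoothTruncation b c (u x), ?_, hm.trans_le hm', ?_⟩
  · exact hη.mul_smoothTruncation hbc hu.contDiff fun x hx =>
      hc1.trans_le ((hφ1 x ⟨ball_subset_closedBall hx.1, hx.2⟩).trans (hφu x))
  calc dirichletEnergy p (fun x => η x * smoothTruncation b c (u x))
      ≤ (1 / 2) ^ (1 - p) * (dirichletEnergy p u + 2 ^ p * dirichletEnergy p η) :=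
        hu.dirichletEnergy_mul_smoothTruncation_le hp hbc hη hη01 fun x =>
          (smoothTruncation.le_max hbc _).trans (max_le (by linarith [hu1 x]) zero_le_two)
    _ ≤ A := mul_le_mul_of_nonneg_left (add_le_add_left hEu _) (by positivity)
    _ = A / m * m := (div_mul_cancel₀ _ hm.ne').symm
    _ ≤ _ := mul_le_mul_of_nonneg_left hm' (by positivity)

end NegligibleBall

section PoincareConstant

variable {N : ℕ} {p γ : ℝ} {Ω : Set (EuclideanSpace ℝ (Fin N))}

theorem lambdaP_nonneg (p : ℝ) (Ω : Set (EuclideanSpace ℝ (Fin N))) : 0 ≤ lambdaP p Ω :=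
  Real.sInf_nonneg (by rintro _ ⟨φ, -, -, -, -, rfl⟩; exact dirichletEnergy_nonneg p φ)

theorem lambdaP_empty (hp : p ≠ 0) : lambdaP p (∅ : Set (EuclideanSpace ℝ (Fin N))) = 0 := by
  refine (congrArg sInf (eq_empty_of_forall_notMem ?_)).trans Real.sInf_empty
  rintro _ ⟨φ, -, -, hφ, hφ1, -⟩
  have hφ0 : φ = 0 := tsupport_eq_empty_iff.1 (subset_empty_iff.1 hφ)
  simp [hφ0, Real.zero_rpow hp] at hφ1

theorem lambdaP_le_of_dirichletEnergy_le {φ : EuclideanSpace ℝ (Fin N) → ℝ} {M : ℝ}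
    (hp : p ≠ 0) (hφ : IsTestFunction φ Ω) (hm : 0 < ∫ x, |φ x| ^ p)
    (h : dirichletEnergy p φ ≤ M * ∫ x, |φ x| ^ p) : lambdaP p Ω ≤ M := by
  set m := ∫ x, |φ x| ^ p
  set k := (m ^ p⁻¹)⁻¹
  have hkp : |k| ^ p = m⁻¹ := by
    rw [abs_of_pos (by positivity), Real.inv_rpow (by positivity), Real.rpow_inv_rpow hm.le hp]
  have hk := hφ.const_mul k
  have hnorm : ∫ x, |k * φ x| ^ p = 1 := by
    simp_rw [abs_mul, Real.mul_rpow (abs_nonneg k) (abs_nonneg _), integral_const_mul, hkp]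
    exact inv_mul_cancel₀ hm.ne'
  calc lambdaP p Ω ≤ dirichletEnergy p fun x => k * φ x :=
        csInf_le ⟨0, by rintro _ ⟨ψ, -, -, -, -, rfl⟩; exact dirichletEnergy_nonneg p ψ⟩
          ⟨_, hk.contDiff, hk.hasCompactSupport, hk.tsupport_subset, hnorm, rfl⟩
    _ = m⁻¹ * dirichletEnergy p φ := by rw [dirichletEnergy_const_mul hφ.differentiable, hkp]
    _ ≤ M := (inv_mul_le_iff₀' hm).2 h

theorem exists_lambdaP_le_of_isNegligible [NeZero N] (hp : 1 ≤ p) (hγ : γ < 1) :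
    ∃ M > 0, ∀ (Ω : Set (EuclideanSpace ℝ (Fin N))) (x₀ : EuclideanSpace ℝ (Fin N)) (r : ℝ),
      IsOpen Ω → 0 < r → IsNegligible p γ Ω x₀ r → lambdaP p Ω ≤ M * (1 / r) ^ p := by
  obtain ⟨M, hM, hψ⟩ := exists_isTestFunction_dirichletEnergy_le hp hγ
    (0 : EuclideanSpace ℝ (Fin N)) one_pos
  refine ⟨M, hM, fun Ω x₀ r hΩ hr hneg => ?_⟩
  let e := (DilationEquiv.smulTorsor x₀ hr.ne').toHomeomorph
  obtain ⟨ψ, hψt, hψm, hψE⟩ := hψ (e ⁻¹' Ω) (hΩ.preimage e.continuous)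
    (hneg.preimage_smul_add hr)
  set φ := ψ ∘ e.symm
  have hφψ : (fun y => φ (r • y + x₀)) = ψ := funext fun y => congrArg ψ (e.symm_apply_apply y)
  have hE := dirichletEnergy_comp_smul_add (p := p) φ x₀ hr.le
  have hm := integral_comp_smul_add (fun x => |φ x| ^ p) x₀ hr.le
  rw [hφψ] at hE
  simp only [congrFun hφψ, smul_eq_mul] at hm
  have hrN : 0 < (r ^ Module.finrank ℝ (EuclideanSpace ℝ (Fin N)))⁻¹ := by positivity
  have hrp : 0 < r ^ p := by positivity
  refine lambdaP_le_of_dirichletEnergy_le (by linarith) (hψt.comp_homeomorph_symm ?_)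
    (pos_of_mul_pos_right (hm ▸ hψm) hrN.le) ?_
  · exact (contDiff_id.sub contDiff_const).const_smul r⁻¹
  · rw [hE, hm, mul_right_comm, mul_left_comm, mul_comm, mul_le_mul_iff_right₀ hrN] at hψE
    rw [one_div, Real.inv_rpow hr.le, ← div_eq_mul_inv, div_mul_eq_mul_div, le_div_iff₀' hrp]
    exact hψE

end PoincareConstant

section CapacitaryInradius

variable {N : ℕ} {p γ : ℝ} {Ω : Set (EuclideanSpace ℝ (Fin N))}

theorem pCapacity_empty (hp : p ≠ 0) (U : Set (EuclideanSpace ℝ (Fin N))) :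
    pCapacity p ∅ U = 0 := by
  have hzero : IsTestFunction (0 : EuclideanSpace ℝ (Fin N) → ℝ) U :=
    ⟨contDiff_const, .zero, by simp⟩
  refine le_antisymm ((pCapacity_le hzero (by simp)).trans_eq ?_) pCapacity_nonneg
  simp [dirichletEnergy, Real.zero_rpow hp]

theorem capInradius_pos (hp : p ≠ 0) (hγ : 0 ≤ γ) (hΩ : IsOpen Ω) (hne : Ω.Nonempty) :
    0 < capInradius p γ Ω := by
  obtain ⟨x, hx⟩ := hne
  obtain ⟨r, hr, hrΩ⟩ := nhds_basis_closedBall.mem_iff.1 (hΩ.mem_nhds hx)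
  have hneg : IsNegligible p γ Ω x r := by
    rw [IsNegligible, sdiff_eq_empty.2 hrΩ, pCapacity_empty hp]
    exact mul_nonneg hγ pCapacity_nonneg
  exact (ENNReal.ofReal_pos.2 hr).trans_le (le_sSup ⟨r, hr, rfl, x, hneg⟩)

theorem exists_lambdaP_le_of_lt_capInradius [NeZero N] (hp : 1 ≤ p) (hγ : γ < 1) :
    ∃ M > 0, ∀ (Ω : Set (EuclideanSpace ℝ (Fin N))) (r : ℝ), IsOpen Ω → 0 < r →
      ENNReal.ofReal r < capInradius p γ Ω → lambdaP p Ω ≤ M * (1 / r) ^ p := by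
  obtain ⟨M, hM, hle⟩ := exists_lambdaP_le_of_isNegligible (N := N) hp hγ
  refine ⟨M, hM, fun Ω r hΩ hr hlt => ?_⟩
  obtain ⟨_, ⟨s, hs, rfl, x₀, hneg⟩, hrs⟩ := lt_sSup_iff.1 hlt
  have hrs' : r ≤ s := ((ENNReal.ofReal_lt_ofReal_iff hs).1 hrs).le
  calc lambdaP p Ω ≤ M * (1 / s) ^ p := hle Ω x₀ s hΩ hs hneg
    _ ≤ M * (1 / r) ^ p := by gcongr

end CapacitaryInradius

theorem main_upper_bound_general (N : ℕ) (p γ : ℝ) (hN : 0 < N) (hp : 1 ≤ p) (hγ0 : 0 ≤ γ)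
    (hγ1 : γ < 1) :
    ∃ C : ℝ, 0 < C ∧ ∀ Ω : Set (EuclideanSpace ℝ (Fin N)), IsOpen Ω →
      (capInradius p γ Ω ≠ ⊤ →
        lambdaP p Ω ≤ C * (1 / (capInradius p γ Ω).toReal) ^ p) ∧
      (capInradius p γ Ω = ⊤ → lambdaP p Ω = 0) := by
  have : NeZero N := ⟨hN.ne'⟩
  have hp0 : 0 < p := by linarith
  obtain ⟨M, hM, hle⟩ := exists_lambdaP_le_of_lt_capInradius (N := N) hp hγ1
  refine ⟨M, hM, fun Ω hΩ => ⟨fun hfin => ?_, fun htop => ?_⟩⟩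
  · rcases Ω.eq_empty_or_nonempty with rfl | hne
    · rw [lambdaP_empty hp0.ne']
      positivity
    have hR : 0 < (capInradius p γ Ω).toReal :=
      ENNReal.toReal_pos (capInradius_pos hp0.ne' hγ0 hΩ hne).ne' hfin
    have hlim : Tendsto (fun r : ℝ => M * (1 / r) ^ p) (𝓝[<] (capInradius p γ Ω).toReal)
        (𝓝 (M * (1 / (capInradius p γ Ω).toReal) ^ p)) :=
      (((continuousAt_const.div continuousAt_id hR.ne').rpow_const
        (Or.inr hp0.le)).const_mul M).tendsto.mono_left nhdsWithin_le_nhds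
    exact ge_of_tendsto hlim (eventually_of_mem (Ioo_mem_nhdsLT hR) fun r hr =>
      hle Ω r hΩ hr.1 ((ENNReal.ofReal_lt_iff_lt_toReal hr.1.le hfin).2 hr.2))
  · have hlim : Tendsto (fun r : ℝ => M * (1 / r) ^ p) atTop (𝓝 0) := by
      have hdiv : Tendsto (fun r : ℝ => 1 / r) atTop (𝓝 0) :=
        tendsto_const_nhds.div_atTop tendsto_id
      simpa only [Real.zero_rpow hp0.ne', mul_zero] using
        (hdiv.rpow_const (Or.inr hp0.le)).const_mul M
    refine (ge_of_tendsto hlim ?_).antisymm (lambdaP_nonneg p Ω)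
    filter_upwards [eventually_gt_atTop 0] with r hr
    exact hle Ω r hΩ hr (htop ▸ ENNReal.ofReal_lt_top)

/-- Upper bound of the Main Theorem: for `1 ≤ p ≤ N` and `0 < γ < 1` there is a constant
`C = C(N,p,γ) > 0` such that for every open set `Ω` with finite capacitary inradius,
`λ_p(Ω) ≤ C R_{p,γ}(Ω)^{-p}`; if the capacitary inradius is infinite, then `λ_p(Ω) = 0`. -/
theorem main_upper_bound (N : ℕ) (p γ : ℝ) (hN : 2 ≤ N) (hp1 : 1 ≤ p) (hpN : p ≤ (N:ℝ))
    (hγ0 : 0 < γ) (hγ1 : γ < 1) :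
    ∃ C : ℝ, 0 < C ∧ ∀ Ω : Set (EuclideanSpace ℝ (Fin N)), IsOpen Ω →
      (capInradius p γ Ω ≠ ⊤ →
        lambdaP p Ω ≤ C * (1 / (capInradius p γ Ω).toReal) ^ p) ∧
      (capInradius p γ Ω = ⊤ → lambdaP p Ω = 0) :=
  main_upper_bound_general N p γ (by lia) hp1 hγ0.le hγ1
end
end
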